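/- arXiv:2403.08171 — 8 statements merged into one kernel-verified Lean document; each statement's English description precedes it below -/
import Mathlib

section
/- Let E be a real inner product space, X ⊆ E a convex set, and f : E → ℝ a function that is convex on X. Let x, p ∈ X and suppose p_x ∈ X is a proximal point of f at x over X, i.e., p_x minimizes y ↦ f(y) + (1/2)‖y − x‖² over X. Then ‖x − p_x‖² − ‖x − p‖² ≤ 2·f(p) − 2·f(p_x) − ‖p − p_x‖². -/
/-!
Adding `c / 2 * ‖y - x‖ ^ 2` to an `m`-strongly convex function gives an `(m + c)`-strongly convex
function, and a strongly convex function grows at least quadratically away from a minimizer.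
Applied to the proximal objective, whose minimizer is the proximal point, this is the claim.
-/

open Filter Topology

theorem uniformConvexOn_add_le_of_isMinOn {E : Type*} [NormedAddCommGroup E] [NormedSpace ℝ E]
    {s : Set E} {φ : ℝ → ℝ} {g : E → ℝ} {a b : E} (hg : UniformConvexOn s φ g)
    (ha : a ∈ s) (hb : b ∈ s) (hmin : IsMinOn g s a) :
    g a + φ ‖b - a‖ ≤ g b := by
  -- Minimality at `t • b + (1 - t) • a`, divided by `t`; as `t → 0` it yields the full modulus.
  have segment_bound : ∀ t ∈ Set.Ioo (0 : ℝ) 1, g a + (1 - t) * φ ‖b - a‖ ≤ g b := by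
    rintro t ⟨ht₀, ht₁⟩
    have hsum : t + (1 - t) = 1 := by ring
    have hle : g a ≤ t * g b + (1 - t) * g a - t * (1 - t) * φ ‖b - a‖ :=
      (hmin (hg.1 hb ha ht₀.le (sub_nonneg.2 ht₁.le) hsum)).trans
        (hg.2 hb ha ht₀.le (sub_nonneg.2 ht₁.le) hsum)
    refine le_of_mul_le_mul_left ?_ ht₀
    linarith
  have hlim : Tendsto (fun t : ℝ ↦ g a + (1 - t) * φ ‖b - a‖) (𝓝[>] 0)
      (𝓝 (g a + φ ‖b - a‖)) := by
    have hcont : Continuous fun t : ℝ ↦ g a + (1 - t) * φ ‖b - a‖ := by fun_prop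
    simpa using (hcont.tendsto 0).mono_left nhdsWithin_le_nhds
  exact le_of_tendsto hlim (eventually_of_mem (Ioo_mem_nhdsGT one_pos) segment_bound)

section InnerProductSpace

variable {E : Type*} [NormedAddCommGroup E] [InnerProductSpace ℝ E] {X : Set E}

theorem strongConvexOn_mul_norm_sub_sq (hX : Convex ℝ X) (c : ℝ) (x : E) :
    StrongConvexOn X c fun y ↦ c / 2 * ‖y - x‖ ^ 2 := by
  have expand (y : E) : c / 2 * ‖y - x‖ ^ 2 - c / 2 * ‖y‖ ^ 2 =
      (-c • innerₛₗ ℝ x) y + c / 2 * ‖x‖ ^ 2 := by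
    simp only [norm_sub_sq_real, LinearMap.smul_apply, innerₛₗ_apply_apply, smul_eq_mul,
      real_inner_comm x y]
    ring
  simp only [strongConvexOn_iff_convex, expand]
  exact ((-c • innerₛₗ ℝ x).convexOn hX).add_const (c / 2 * ‖x‖ ^ 2)

theorem stmt_0_general {m c : ℝ} {f : E → ℝ} (hf : StrongConvexOn X m f) {x p px : E}
    (hp : p ∈ X) (hpx : px ∈ X)
    (hmin : IsMinOn (fun y ↦ f y + c / 2 * ‖y - x‖ ^ 2) X px) :
    c * ‖x - px‖ ^ 2 - c * ‖x - p‖ ^ 2 ≤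
      2 * f p - 2 * f px - (m + c) * ‖p - px‖ ^ 2 := by
  have growth : f px + c / 2 * ‖px - x‖ ^ 2 + (m / 2 * ‖p - px‖ ^ 2 + c / 2 * ‖p - px‖ ^ 2) ≤
      f p + c / 2 * ‖p - x‖ ^ 2 :=
    uniformConvexOn_add_le_of_isMinOn
      (hf.add (strongConvexOn_mul_norm_sub_sq hf.1 c x)) hpx hp hmin
  rw [norm_sub_rev x px, norm_sub_rev x p]
  linarith

end InnerProductSpace

/-- Let `E` be a real inner product space, `X ⊆ E` a convex set, and
`f : E → ℝ` convex on `X`. Let `x, p ∈ X` and suppose `px ∈ X` is a proximal point of `f`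
at `x` over `X`, i.e. `px` minimizes `y ↦ f y + (1/2)‖y − x‖²` over `X`. Then
`‖x − px‖² − ‖x − p‖² ≤ 2 f p − 2 f px − ‖p − px‖²`. -/
theorem stmt_0 {E : Type*} [NormedAddCommGroup E] [InnerProductSpace ℝ E]
    {X : Set E} (hXconv : Convex ℝ X) {f : E → ℝ} (hf : ConvexOn ℝ X f)
    {x p px : E} (hx : x ∈ X) (hp : p ∈ X) (hpx : px ∈ X)
    (hmin : IsMinOn (fun y => f y + (1 / 2) * ‖y - x‖ ^ 2) X px) :
    ‖x - px‖ ^ 2 - ‖x - p‖ ^ 2 ≤ 2 * f p - 2 * f px - ‖p - px‖ ^ 2 := by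
  simpa only [one_mul, zero_add] using stmt_0_general (strongConvexOn_zero.2 hf) hp hpx hmin
end

section
/- Let X ⊆ ℝ^d be a nonempty closed convex set, T ≥ 1, and let η_1 ≥ η_2 ≥ ⋯ ≥ η_T > 0 be non-increasing step sizes. For t = 1, …, T let ℓ^t : ℝ^d → ℝ be convex and differentiable. Let x^1 ∈ X and define online gradient descent iterates x^{t+1} = Π_X[x^t − η_t ∇ℓ^t(x^t)] for t = 1, …, T. Let f : ℝ^d → ℝ be convex on X and suppose for each t = 1, …, T there is a proximal point p^t ∈ X of f at x^t over X. Set D = max_{1 ≤ t ≤ T} ‖x^t − p^t‖ and B_f = max_{1 ≤ t ≤ T} f(p^t) − min_{1 ≤ t ≤ T} f(p^t). Then ∑_{t=1}^T ⟨∇ℓ^t(x^t), x^t − p^t⟩ ≤ (D² + 2B_f − ‖x^{T+1} − p^T‖²)/(2η_T) + ∑_{t=1}^T (η_t/2)‖∇ℓ^t(x^t)‖² − ∑_{t=1}^{T−1} (1/(2η_t))‖p^t − p^{t+1}‖². -/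
open scoped InnerProductSpace

/-!
The proximal objective `f + ‖· - x‖² / 2` is `1`-strongly convex, so it grows quadratically around
its minimizer. For the potential `Φ x p = ‖x - p‖² + 2 f p`, comparing `p (t + 1)` with the
competitor `p t` in this way gives
`Φ (x (t + 1)) (p (t + 1)) + ‖p t - p (t + 1)‖² ≤ Φ (x (t + 1)) (p t)`.
One projected gradient step bounds the regret at time `t` by
`(Φ (x t) (p t) - Φ (x (t + 1)) (p t)) / (2 η t)` plus the gradient term, because the two copies of
`2 f (p t)` cancel. As the weights `1 / (2 η t)` increase and `Φ (x t) (p t)` is bounded by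
`D² + 2 max f (p t)`, summation by parts finishes the proof.
-/

section Minimizers

open Filter Topology

theorem add_modulus_le_of_isMinOn_of_uniformConvexOn {E : Type*} [NormedAddCommGroup E]
    [NormedSpace ℝ E] {s : Set E} {φ : ℝ → ℝ} {f : E → ℝ} {p y : E}
    (hf : UniformConvexOn s φ f) (hmin : IsMinOn f s p) (hp : p ∈ s) (hy : y ∈ s) :
    f p + φ ‖p - y‖ ≤ f y := by
  have on_segment : ∀ r ∈ Set.Ioo (0 : ℝ) 1, f p + (1 - r) * φ ‖p - y‖ ≤ f y := by
    rintro r ⟨hr0, hr1⟩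
    have hr1' : 0 ≤ 1 - r := sub_nonneg.2 hr1.le
    have h_le : f p ≤ f ((1 - r) • p + r • y) := hmin (hf.1 hp hy hr1' hr0.le (sub_add_cancel 1 r))
    have h_conv := hf.2 hp hy hr1' hr0.le (sub_add_cancel 1 r)
    simp only [smul_eq_mul] at h_conv
    refine le_of_mul_le_mul_left ?_ hr0
    linarith
  have h_tendsto : Tendsto (fun r : ℝ ↦ f p + (1 - r) * φ ‖p - y‖) (𝓝[>] 0)
      (𝓝 (f p + (1 - 0) * φ ‖p - y‖)) :=
    (Continuous.tendsto (by fun_prop) 0).mono_left nhdsWithin_le_nhds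
  simpa only [sub_zero, one_mul] using
    le_of_tendsto h_tendsto (eventually_of_mem (Ioo_mem_nhdsGT one_pos) on_segment)

end Minimizers

section Potential

variable {E : Type*} [SeminormedAddCommGroup E]

/-- The potential `‖x - p‖² + 2 f p`, twice the proximal objective of `f` at `x` evaluated at `p`.
It measures the progress of the iterates `x` towards the moving comparators `p`. -/
def proxPotential (f : E → ℝ) (x p : E) : ℝ :=
  ‖x - p‖ ^ 2 + 2 * f p

theorem proxPotential_sub_proxPotential (f : E → ℝ) (x q p : E) :
    proxPotential f x p - proxPotential f q p = ‖x - p‖ ^ 2 - ‖q - p‖ ^ 2 :=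
  add_sub_add_right_eq_sub _ _ _

end Potential

section ProximalPoints

variable {E : Type*} [NormedAddCommGroup E] [InnerProductSpace ℝ E] {s : Set E}

theorem strongConvexOn_add_norm_sub_sq {f : E → ℝ} (hf : ConvexOn ℝ s f) (m : ℝ) (x : E) :
    StrongConvexOn s m fun y ↦ f y + m / 2 * ‖y - x‖ ^ 2 := by
  have h_affine : ConvexOn ℝ s fun y ↦ -m * ⟪x, y⟫_ℝ + m / 2 * ‖x‖ ^ 2 :=
    ((-m • innerₗ E x).convexOn hf.1).add_const _
  refine strongConvexOn_iff_convex.2 ((hf.add h_affine).congr fun y _ ↦ ?_)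
  simp only [Pi.add_apply, norm_sub_sq_real, real_inner_comm x y]
  ring

theorem add_norm_sub_sq_add_norm_sub_sq_le_of_isMinOn {f : E → ℝ} {m : ℝ} {x p y : E}
    (hf : ConvexOn ℝ s f) (hmin : IsMinOn (fun z ↦ f z + m / 2 * ‖z - x‖ ^ 2) s p)
    (hp : p ∈ s) (hy : y ∈ s) :
    f p + m / 2 * ‖p - x‖ ^ 2 + m / 2 * ‖p - y‖ ^ 2 ≤ f y + m / 2 * ‖y - x‖ ^ 2 :=
  add_modulus_le_of_isMinOn_of_uniformConvexOn (strongConvexOn_add_norm_sub_sq hf m x) hmin hp hy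

theorem norm_sub_sq_add_norm_sub_sq_le_of_isMinOn_norm_sub {z q y : E} (hs : Convex ℝ s)
    (hmin : IsMinOn (fun u ↦ ‖u - z‖) s q) (hq : q ∈ s) (hy : y ∈ s) :
    ‖q - z‖ ^ 2 + ‖q - y‖ ^ 2 ≤ ‖y - z‖ ^ 2 := by
  have hmin_sq : IsMinOn (fun u ↦ (0 : ℝ) + 1 / 2 * ‖u - z‖ ^ 2) s q :=
    isMinOn_iff.2 fun u hu ↦ by gcongr 0 + 1 / 2 * ?_ ^ 2; exact hmin hu
  linarith [add_norm_sub_sq_add_norm_sub_sq_le_of_isMinOn (convexOn_const 0 hs) hmin_sq hq hy]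

theorem proxPotential_add_norm_sub_sq_le_of_isMinOn {f : E → ℝ} {x p y : E} (hf : ConvexOn ℝ s f)
    (hmin : IsMinOn (fun z ↦ f z + 1 / 2 * ‖z - x‖ ^ 2) s p) (hp : p ∈ s) (hy : y ∈ s) :
    proxPotential f x p + ‖y - p‖ ^ 2 ≤ proxPotential f x y := by
  have h := add_norm_sub_sq_add_norm_sub_sq_le_of_isMinOn hf hmin hp hy
  rw [norm_sub_rev p x, norm_sub_rev p y, norm_sub_rev y x] at h
  unfold proxPotential
  linarith

theorem inner_le_of_isMinOn_norm_sub_gradient_step {η : ℝ} {x v q y : E} (hs : Convex ℝ s)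
    (hη : 0 < η) (hmin : IsMinOn (fun u ↦ ‖u - (x - η • v)‖) s q) (hq : q ∈ s) (hy : y ∈ s) :
    ⟪v, x - y⟫_ℝ ≤ 1 / (2 * η) * (‖x - y‖ ^ 2 - ‖q - y‖ ^ 2) + η / 2 * ‖v‖ ^ 2 := by
  have h_proj : ‖q - y‖ ^ 2 ≤ ‖y - (x - η • v)‖ ^ 2 := by
    linarith [norm_sub_sq_add_norm_sub_sq_le_of_isMinOn_norm_sub hs hmin hq hy,
      sq_nonneg ‖q - (x - η • v)‖]
  have h_expand : ‖y - (x - η • v)‖ ^ 2 = ‖x - y‖ ^ 2 - 2 * η * ⟪v, x - y⟫_ℝ + η ^ 2 * ‖v‖ ^ 2 := by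
    rw [norm_sub_rev, sub_right_comm, norm_sub_sq_real, real_inner_smul_right, norm_smul, mul_pow,
      Real.norm_eq_abs, sq_abs, real_inner_comm]
    ring
  calc ⟪v, x - y⟫_ℝ
      = 1 / (2 * η) * (‖x - y‖ ^ 2 - ‖y - (x - η • v)‖ ^ 2) + η / 2 * ‖v‖ ^ 2 := by
        rw [h_expand]
        field_simp
        ring
    _ ≤ 1 / (2 * η) * (‖x - y‖ ^ 2 - ‖q - y‖ ^ 2) + η / 2 * ‖v‖ ^ 2 := by gcongr

end ProximalPoints

theorem sum_mul_sub_add_sum_mul_le_of_monotone_weights {R : Type*} [CommRing R] [PartialOrder R]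
    [IsOrderedRing R] {w a b q : ℕ → R} {M : R} {m n : ℕ} (hmn : m ≤ n)
    (hw₀ : ∀ t ∈ Finset.Icc m n, 0 ≤ w t) (hw : ∀ t ∈ Finset.Ico m n, w t ≤ w (t + 1))
    (ha : ∀ t ∈ Finset.Icc m n, a t ≤ M) (hab : ∀ t ∈ Finset.Ico m n, a (t + 1) + q t ≤ b t) :
    ∑ t ∈ Finset.Icc m n, w t * (a t - b t) + ∑ t ∈ Finset.Ico m n, w t * q t
      ≤ w n * (M - b n) := by
  induction n, hmn using Nat.le_induction with
  | base =>
    have hw_m : 0 ≤ w m := hw₀ m (Finset.left_mem_Icc.2 le_rfl)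
    have ha_m : a m ≤ M := ha m (Finset.left_mem_Icc.2 le_rfl)
    simp only [Finset.Icc_self, Finset.sum_singleton, Finset.Ico_self, Finset.sum_empty, add_zero]
    gcongr
  | succ n hmn ih =>
    have hn : n ∈ Finset.Ico m (n + 1) := Finset.mem_Ico.2 ⟨hmn, n.lt_succ_self⟩
    have hIcc : Finset.Icc m n ⊆ Finset.Icc m (n + 1) := Finset.Icc_subset_Icc_right n.le_succ
    have hIco : Finset.Ico m n ⊆ Finset.Ico m (n + 1) := Finset.Ico_subset_Ico_right n.le_succ
    have ih := ih (fun t ht ↦ hw₀ t (hIcc ht)) (fun t ht ↦ hw t (hIco ht))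
      (fun t ht ↦ ha t (hIcc ht)) (fun t ht ↦ hab t (hIco ht))
    have hw_n : 0 ≤ w n := hw₀ n (Finset.Ico_subset_Icc_self hn)
    have h_gap : M - b n + q n ≤ M - a (n + 1) := by
      rw [sub_add]
      exact sub_le_sub_left (le_sub_iff_add_le.2 (hab n hn)) M
    have ha_succ : 0 ≤ M - a (n + 1) :=
      sub_nonneg.2 (ha _ (Finset.right_mem_Icc.2 (hmn.trans n.le_succ)))
    rw [Finset.sum_Icc_succ_top (hmn.trans n.le_succ), Finset.sum_Ico_succ_top hmn]
    calc _ = (∑ t ∈ Finset.Icc m n, w t * (a t - b t) + ∑ t ∈ Finset.Ico m n, w t * q t)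
            + w n * q n + w (n + 1) * (a (n + 1) - b (n + 1)) := by ring
      _ ≤ w n * (M - b n) + w n * q n + w (n + 1) * (a (n + 1) - b (n + 1)) := by gcongr
      _ = w n * (M - b n + q n) + w (n + 1) * (a (n + 1) - b (n + 1)) := by ring
      _ ≤ w n * (M - a (n + 1)) + w (n + 1) * (a (n + 1) - b (n + 1)) := by gcongr
      _ ≤ w (n + 1) * (M - a (n + 1)) + w (n + 1) * (a (n + 1) - b (n + 1)) := by
        gcongr
        exact hw n hn
      _ = w (n + 1) * (M - b (n + 1)) := by ring

section OnlineGradientDescent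

variable {E : Type*} [NormedAddCommGroup E] [InnerProductSpace ℝ E]
  {X : Set E} {η : ℕ → ℝ} {v x p : ℕ → E} {f : E → ℝ}

theorem sum_inner_add_sum_norm_sub_sq_le_of_proxPotential_le {M : ℝ} {m n : ℕ} (hmn : m ≤ n)
    (hηpos : ∀ t ∈ Finset.Icc m n, 0 < η t) (hηmono : ∀ t ∈ Finset.Ico m n, η (t + 1) ≤ η t)
    (hxX : ∀ t ∈ Finset.Icc m n, x (t + 1) ∈ X)
    (hxmin : ∀ t ∈ Finset.Icc m n, IsMinOn (fun y ↦ ‖y - (x t - η t • v t)‖) X (x (t + 1)))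
    (hf : ConvexOn ℝ X f) (hpX : ∀ t ∈ Finset.Icc m n, p t ∈ X)
    (hpmin : ∀ t ∈ Finset.Icc m n, IsMinOn (fun y ↦ f y + 1 / 2 * ‖y - x t‖ ^ 2) X (p t))
    (hM : ∀ t ∈ Finset.Icc m n, proxPotential f (x t) (p t) ≤ M) :
    ∑ t ∈ Finset.Icc m n, ⟪v t, x t - p t⟫_ℝ
        + ∑ t ∈ Finset.Ico m n, 1 / (2 * η t) * ‖p t - p (t + 1)‖ ^ 2
      ≤ 1 / (2 * η n) * (M - proxPotential f (x (n + 1)) (p n))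
        + ∑ t ∈ Finset.Icc m n, η t / 2 * ‖v t‖ ^ 2 := by
  have h_regret : ∑ t ∈ Finset.Icc m n, ⟪v t, x t - p t⟫_ℝ
      ≤ ∑ t ∈ Finset.Icc m n, 1 / (2 * η t)
          * (proxPotential f (x t) (p t) - proxPotential f (x (t + 1)) (p t))
        + ∑ t ∈ Finset.Icc m n, η t / 2 * ‖v t‖ ^ 2 := by
    rw [← Finset.sum_add_distrib]
    refine Finset.sum_le_sum fun t ht ↦ ?_
    rw [proxPotential_sub_proxPotential]
    exact inner_le_of_isMinOn_norm_sub_gradient_step hf.1 (hηpos t ht) (hxmin t ht) (hxX t ht)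
      (hpX t ht)
  have h_succ_mem : ∀ t ∈ Finset.Ico m n, t + 1 ∈ Finset.Icc m n := fun t ht ↦ by
    rw [Finset.mem_Ico] at ht
    exact Finset.mem_Icc.2 ⟨by lia, ht.2⟩
  have h_weight_nonneg : ∀ t ∈ Finset.Icc m n, 0 ≤ 1 / (2 * η t) := fun t ht ↦ by
    have := hηpos t ht
    positivity
  have h_weight_mono : ∀ t ∈ Finset.Ico m n, 1 / (2 * η t) ≤ 1 / (2 * η (t + 1)) := fun t ht ↦ by
    have := hηpos (t + 1) (h_succ_mem t ht)
    have := hηmono t ht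
    gcongr
  have h_potential : ∀ t ∈ Finset.Ico m n,
      proxPotential f (x (t + 1)) (p (t + 1)) + ‖p t - p (t + 1)‖ ^ 2
        ≤ proxPotential f (x (t + 1)) (p t) := fun t ht ↦
    proxPotential_add_norm_sub_sq_le_of_isMinOn hf (hpmin _ (h_succ_mem t ht))
      (hpX _ (h_succ_mem t ht)) (hpX t (Finset.Ico_subset_Icc_self ht))
  linarith [sum_mul_sub_add_sum_mul_le_of_monotone_weights hmn h_weight_nonneg h_weight_mono hM
    h_potential]

theorem stmt_2_general {T : ℕ} (hT : 1 ≤ T) (hηpos : ∀ t ∈ Finset.Icc 1 T, 0 < η t)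
    (hηmono : ∀ t ∈ Finset.Icc 1 (T - 1), η (t + 1) ≤ η t)
    (hxX : ∀ t ∈ Finset.Icc 1 T, x (t + 1) ∈ X)
    (hxmin : ∀ t ∈ Finset.Icc 1 T, IsMinOn (fun y ↦ ‖y - (x t - η t • v t)‖) X (x (t + 1)))
    (hf : ConvexOn ℝ X f) (hpX : ∀ t ∈ Finset.Icc 1 T, p t ∈ X)
    (hpmin : ∀ t ∈ Finset.Icc 1 T, IsMinOn (fun y ↦ f y + 1 / 2 * ‖y - x t‖ ^ 2) X (p t))
    {D Bf : ℝ}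
    (hD : D = (Finset.Icc 1 T).sup' (Finset.nonempty_Icc.mpr hT) fun t ↦ ‖x t - p t‖)
    (hBf : Bf = ((Finset.Icc 1 T).sup' (Finset.nonempty_Icc.mpr hT) fun t ↦ f (p t))
      - (Finset.Icc 1 T).inf' (Finset.nonempty_Icc.mpr hT) fun t ↦ f (p t)) :
    ∑ t ∈ Finset.Icc 1 T, ⟪v t, x t - p t⟫_ℝ
      ≤ (D ^ 2 + 2 * Bf - ‖x (T + 1) - p T‖ ^ 2) / (2 * η T)
        + ∑ t ∈ Finset.Icc 1 T, η t / 2 * ‖v t‖ ^ 2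
        - ∑ t ∈ Finset.Icc 1 (T - 1), 1 / (2 * η t) * ‖p t - p (t + 1)‖ ^ 2 := by
  have hIco : Finset.Icc 1 (T - 1) = Finset.Ico 1 T :=
    Finset.Icc_sub_one_right_eq_Ico_of_not_isMin (not_isMin_of_lt hT) 1
  rw [hIco] at hηmono ⊢
  set fmax := (Finset.Icc 1 T).sup' (Finset.nonempty_Icc.mpr hT) fun t ↦ f (p t)
  have h_potential_le : ∀ t ∈ Finset.Icc 1 T, proxPotential f (x t) (p t) ≤ D ^ 2 + 2 * fmax := by
    intro t ht
    have h_dist : ‖x t - p t‖ ≤ D := hD ▸ Finset.le_sup' (fun t ↦ ‖x t - p t‖) ht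
    have h_value : f (p t) ≤ fmax := Finset.le_sup' (fun t ↦ f (p t)) ht
    unfold proxPotential
    gcongr
  have h_last : 1 / (2 * η T) * (D ^ 2 + 2 * fmax - proxPotential f (x (T + 1)) (p T))
      ≤ (D ^ 2 + 2 * Bf - ‖x (T + 1) - p T‖ ^ 2) / (2 * η T) := by
    have hT_mem : T ∈ Finset.Icc 1 T := Finset.right_mem_Icc.2 hT
    have hηT : 0 < η T := hηpos T hT_mem
    rw [one_div_mul_eq_div]
    refine div_le_div_of_nonneg_right ?_ (by positivity)
    unfold proxPotential
    linarith [Finset.inf'_le (fun t ↦ f (p t)) hT_mem]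
  linarith [sum_inner_add_sum_norm_sub_sq_le_of_proxPotential_le hT hηpos hηmono hxX hxmin hf hpX
    hpmin h_potential_le]

end OnlineGradientDescent

/-- Online gradient descent with non-increasing step sizes over a nonempty
closed convex set `X ⊆ ℝ^d`, against convex differentiable losses `ℓ^t` (with gradient `g t`),
satisfies the proximal regret bound for any `f` convex on `X`, where `p t` is a proximal point
of `f` at `x t` over `X`, `D = max_{1≤t≤T} ‖x t − p t‖` and
`B_f = max_{1≤t≤T} f (p t) − min_{1≤t≤T} f (p t)`. -/
theorem stmt_2 {d : ℕ} {X : Set (EuclideanSpace ℝ (Fin d))}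
    (hXne : X.Nonempty) (hXclosed : IsClosed X) (hXconv : Convex ℝ X)
    {T : ℕ} (hT : 1 ≤ T)
    {η : ℕ → ℝ} (hηpos : ∀ t ∈ Finset.Icc 1 T, 0 < η t)
    (hηmono : ∀ t ∈ Finset.Icc 1 (T - 1), η (t + 1) ≤ η t)
    {ℓ : ℕ → EuclideanSpace ℝ (Fin d) → ℝ}
    {g : ℕ → EuclideanSpace ℝ (Fin d) → EuclideanSpace ℝ (Fin d)}
    (hconv : ∀ t ∈ Finset.Icc 1 T, ConvexOn ℝ Set.univ (ℓ t))
    (hgrad : ∀ t ∈ Finset.Icc 1 T, ∀ a, HasGradientAt (ℓ t) (g t a) a)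
    (proj : EuclideanSpace ℝ (Fin d) → EuclideanSpace ℝ (Fin d))
    (hproj : ∀ z, proj z ∈ X ∧ ∀ y ∈ X, ‖proj z - z‖ ≤ ‖y - z‖)
    {x : ℕ → EuclideanSpace ℝ (Fin d)} (hx1 : x 1 ∈ X)
    (hstep : ∀ t ∈ Finset.Icc 1 T, x (t + 1) = proj (x t - η t • g t (x t)))
    {f : EuclideanSpace ℝ (Fin d) → ℝ} (hf : ConvexOn ℝ X f)
    {p : ℕ → EuclideanSpace ℝ (Fin d)} (hpX : ∀ t ∈ Finset.Icc 1 T, p t ∈ X)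
    (hpmin : ∀ t ∈ Finset.Icc 1 T,
      IsMinOn (fun y => f y + (1 / 2) * ‖y - x t‖ ^ 2) X (p t))
    {D Bf : ℝ}
    (hD : D = (Finset.Icc 1 T).sup' (Finset.nonempty_Icc.mpr hT) fun t => ‖x t - p t‖)
    (hBf : Bf = ((Finset.Icc 1 T).sup' (Finset.nonempty_Icc.mpr hT) fun t => f (p t))
      - (Finset.Icc 1 T).inf' (Finset.nonempty_Icc.mpr hT) fun t => f (p t)) :
    ∑ t ∈ Finset.Icc 1 T, ⟪g t (x t), x t - p t⟫_ℝ
      ≤ (D ^ 2 + 2 * Bf - ‖x (T + 1) - p T‖ ^ 2) / (2 * η T)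
        + ∑ t ∈ Finset.Icc 1 T, η t / 2 * ‖g t (x t)‖ ^ 2
        - ∑ t ∈ Finset.Icc 1 (T - 1), 1 / (2 * η t) * ‖p t - p (t + 1)‖ ^ 2 :=
  stmt_2_general hT hηpos hηmono (fun t ht ↦ hstep t ht ▸ (hproj _).1)
    (fun t ht ↦ hstep t ht ▸ isMinOn_iff.2 (hproj _).2) hf hpX hpmin hD hBf
end

section
/- Let X ⊆ ℝ^d be a nonempty closed convex set, T ≥ 1, and let η_1 ≥ η_2 ≥ ⋯ ≥ η_T > 0 be non-increasing step sizes. For t = 1, …, T let ℓ^t : ℝ^d → ℝ be convex and differentiable. Let x^1 ∈ X and define online gradient descent iterates x^{t+1} = Π_X[x^t − η_t ∇ℓ^t(x^t)] for t = 1, …, T. Let f : ℝ^d → ℝ be differentiable with L-Lipschitz gradient for some L < 1, and suppose for each t = 1, …, T there is a proximal point p^t ∈ X of f at x^t over X. Set D = max_{1 ≤ t ≤ T} ‖x^t − p^t‖ and B_f = max_{1 ≤ t ≤ T} f(p^t) − min_{1 ≤ t ≤ T} f(p^t). Then ∑_{t=1}^T ⟨∇ℓ^t(x^t), x^t − p^t⟩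 ≤ (D² + 2B_f − ‖x^{T+1} − p^T‖²)/(2η_T) + ∑_{t=1}^T (η_t/2)‖∇ℓ^t(x^t)‖². -/
open scoped InnerProductSpace

/-!
Moving to a nearest point of `X` does not increase the distance to points of `X`, so one step of
gradient descent costs at most `(‖x t - p t‖² - ‖x (t + 1) - p t‖²) / (2 η t) + (η t / 2) ‖g t‖²`.
The distances do not telescope because the comparator `p t` moves, but minimality of `p (t + 1)`
gives `‖x (t + 1) - p (t + 1)‖² + 2 f (p (t + 1)) ≤ ‖x (t + 1) - p t‖² + 2 f (p t)`. Hence the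
potential `‖x - p‖² + 2 f p` does not increase when the comparator moves, and Abel summation against
the non-decreasing weights `1 / (2 η t)` finishes the proof. Measuring `f` relative to `f (p T)`
makes the final potential exactly `‖x (T + 1) - p T‖²`.
-/

theorem sum_Icc_mul_sub_le {R : Type*} [Ring R] [PartialOrder R] [IsOrderedRing R]
    {w a b : ℕ → R} {M : R} {m n : ℕ} (hmn : m ≤ n)
    (hw : ∀ t ∈ Finset.Icc m n, 0 ≤ w t) (hwmono : ∀ t ∈ Finset.Ico m n, w t ≤ w (t + 1))
    (ha : ∀ t ∈ Finset.Icc m n, a t ≤ M) (hab : ∀ t ∈ Finset.Ico m n, a (t + 1) ≤ b t) :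
    ∑ t ∈ Finset.Icc m n, w t * (a t - b t) ≤ w n * (M - b n) := by
  induction n, hmn using Nat.le_induction with
  | base =>
    rw [Finset.Icc_self, Finset.sum_singleton]
    have hmm : m ∈ Finset.Icc m m := Finset.left_mem_Icc.2 le_rfl
    exact mul_le_mul_of_nonneg_left (sub_le_sub_right (ha m hmm) _) (hw m hmm)
  | succ n hmn ih =>
    have hIcc : Finset.Icc m n ⊆ Finset.Icc m (n + 1) := Finset.Icc_subset_Icc_right n.le_succ
    have hIco : Finset.Ico m n ⊆ Finset.Ico m (n + 1) := Finset.Ico_subset_Ico_right n.le_succ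
    have hn : n ∈ Finset.Ico m (n + 1) := Finset.mem_Ico.2 ⟨hmn, n.lt_succ_self⟩
    have hn' : n + 1 ∈ Finset.Icc m (n + 1) := Finset.right_mem_Icc.2 (by omega)
    have hwn : 0 ≤ w n := hw n (Finset.Ico_subset_Icc_self hn)
    have hMa : 0 ≤ M - a (n + 1) := sub_nonneg.2 (ha _ hn')
    calc ∑ t ∈ Finset.Icc m (n + 1), w t * (a t - b t)
        = ∑ t ∈ Finset.Icc m n, w t * (a t - b t) + w (n + 1) * (a (n + 1) - b (n + 1)) :=
          Finset.sum_Icc_succ_top (by omega) _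
      _ ≤ w n * (M - b n) + w (n + 1) * (a (n + 1) - b (n + 1)) := by
          gcongr
          exact ih (fun t ht => hw t (hIcc ht)) (fun t ht => hwmono t (hIco ht))
            (fun t ht => ha t (hIcc ht)) (fun t ht => hab t (hIco ht))
      _ ≤ w n * (M - a (n + 1)) + w (n + 1) * (a (n + 1) - b (n + 1)) := by
          gcongr
          exact hab n hn
      _ ≤ w (n + 1) * (M - a (n + 1)) + w (n + 1) * (a (n + 1) - b (n + 1)) := by
          gcongr
          exact hwmono n hn
      _ = w (n + 1) * (M - b (n + 1)) := by
          rw [← mul_add, sub_add_sub_cancel]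

section SeminormedAddCommGroup

variable {E : Type*} [SeminormedAddCommGroup E]

/-- `w` is a nearest point of `X` to `z`, i.e. a value of the projection `Π_X[z]`. As a relation it
makes sense for sets in which nearest points may fail to exist. -/
def IsNearestPoint (X : Set E) (z w : E) : Prop :=
  w ∈ X ∧ ∀ y ∈ X, ‖w - z‖ ≤ ‖y - z‖

/-- `p` is a proximal point of `f` at `x` over `X`. It is a relation because, without convexity
of the objective, a minimizer need not exist or be unique. -/
def IsProximalPoint (f : E → ℝ) (X : Set E) (x p : E) : Prop :=
  p ∈ X ∧ IsMinOn (fun y => f y + (1 / 2) * ‖y - x‖ ^ 2) X p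

theorem IsProximalPoint.norm_sub_sq_add_le {f : E → ℝ} {X : Set E} {x p y : E}
    (hp : IsProximalPoint f X x p) (hy : y ∈ X) :
    ‖x - p‖ ^ 2 + 2 * f p ≤ ‖x - y‖ ^ 2 + 2 * f y := by
  have hmin : f p + (1 / 2) * ‖p - x‖ ^ 2 ≤ f y + (1 / 2) * ‖y - x‖ ^ 2 := hp.2 hy
  rw [norm_sub_rev x p, norm_sub_rev x y]
  linarith

theorem sum_Icc_mul_norm_sub_sq_sub_le_of_isProximalPoint {X : Set E} {m n : ℕ} (hmn : m ≤ n)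
    {w : ℕ → ℝ}
    (hw : ∀ t ∈ Finset.Icc m n, 0 ≤ w t) (hwmono : ∀ t ∈ Finset.Ico m n, w t ≤ w (t + 1))
    {x p : ℕ → E} {f : E → ℝ} (hp : ∀ t ∈ Finset.Icc m n, IsProximalPoint f X (x t) (p t))
    {D B : ℝ} (hD : ∀ t ∈ Finset.Icc m n, ‖x t - p t‖ ≤ D)
    (hB : ∀ t ∈ Finset.Icc m n, f (p t) - f (p n) ≤ B) :
    ∑ t ∈ Finset.Icc m n, w t * (‖x t - p t‖ ^ 2 - ‖x (t + 1) - p t‖ ^ 2)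
      ≤ w n * (D ^ 2 + 2 * B - ‖x (n + 1) - p n‖ ^ 2) := by
  let potential (z : E) (t : ℕ) : ℝ := ‖z - p t‖ ^ 2 + 2 * (f (p t) - f (p n))
  have hbound : ∀ t ∈ Finset.Icc m n, potential (x t) t ≤ D ^ 2 + 2 * B := fun t ht => by
    dsimp only [potential]
    gcongr
    exacts [hD t ht, hB t ht]
  have hmove : ∀ t ∈ Finset.Ico m n,
      potential (x (t + 1)) (t + 1) ≤ potential (x (t + 1)) t := fun t ht => by
    obtain ⟨hmt, htn⟩ := Finset.mem_Ico.1 ht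
    have hprox := (hp (t + 1) (Finset.mem_Icc.2 ⟨by omega, htn⟩)).norm_sub_sq_add_le
      (hp t (Finset.mem_Icc.2 ⟨hmt, htn.le⟩)).1
    dsimp only [potential]
    linarith
  have habel := sum_Icc_mul_sub_le (b := fun t => potential (x (t + 1)) t) hmn hw hwmono
    hbound hmove
  simpa only [potential, add_sub_add_right_eq_sub, sub_self, mul_zero, add_zero] using habel

end SeminormedAddCommGroup

section InnerProductSpace

variable {E : Type*} [NormedAddCommGroup E] [InnerProductSpace ℝ E] {X : Set E}

theorem IsNearestPoint.inner_sub_sub_nonpos {z w y : E} (hX : Convex ℝ X)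
    (hw : IsNearestPoint X z w) (hy : y ∈ X) : ⟪z - w, y - w⟫_ℝ ≤ 0 := by
  have hmin : IsMinOn (fun v => ‖z - v‖) X w := fun v hv => by
    simpa only [Set.mem_ofPred_eq, norm_sub_rev] using hw.2 v hv
  exact (norm_eq_iInf_iff_real_inner_le_zero hX hw.1).1 (hmin.iInf_eq hw.1).symm y hy

theorem IsNearestPoint.norm_sub_le {z w y : E} (hX : Convex ℝ X)
    (hw : IsNearestPoint X z w) (hy : y ∈ X) : ‖w - y‖ ≤ ‖z - y‖ := by
  have hexpand : ‖z - y‖ ^ 2 = ‖z - w‖ ^ 2 - 2 * ⟪z - w, y - w⟫_ℝ + ‖w - y‖ ^ 2 := by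
    rw [← sub_sub_sub_cancel_right z y w, norm_sub_sq_real, norm_sub_rev y w]
  refine le_of_sq_le_sq ?_ (norm_nonneg _)
  linarith [hw.inner_sub_sub_nonpos hX hy, sq_nonneg ‖z - w‖]

theorem IsNearestPoint.inner_gradient_step_le {x g w y : E} {η : ℝ} (hX : Convex ℝ X) (hη : 0 < η)
    (hw : IsNearestPoint X (x - η • g) w) (hy : y ∈ X) :
    ⟪g, x - y⟫_ℝ ≤ (2 * η)⁻¹ * (‖x - y‖ ^ 2 - ‖w - y‖ ^ 2) + η / 2 * ‖g‖ ^ 2 := by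
  have hdist : ‖w - y‖ ^ 2 ≤ ‖x - y‖ ^ 2 - 2 * η * ⟪g, x - y⟫_ℝ + η ^ 2 * ‖g‖ ^ 2 :=
    calc ‖w - y‖ ^ 2 ≤ ‖x - η • g - y‖ ^ 2 := by
          gcongr
          exact hw.norm_sub_le hX hy
      _ = ‖x - y‖ ^ 2 - 2 * η * ⟪g, x - y⟫_ℝ + η ^ 2 * ‖g‖ ^ 2 := by
          rw [sub_right_comm, norm_sub_sq_real, real_inner_smul_right, real_inner_comm, norm_smul,
            mul_pow, Real.norm_eq_abs, sq_abs, mul_assoc]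
  calc ⟪g, x - y⟫_ℝ = (2 * η)⁻¹ * (2 * η * ⟪g, x - y⟫_ℝ) := by field_simp
    _ ≤ (2 * η)⁻¹ * (‖x - y‖ ^ 2 - ‖w - y‖ ^ 2 + η ^ 2 * ‖g‖ ^ 2) := by
        gcongr
        linarith
    _ = (2 * η)⁻¹ * (‖x - y‖ ^ 2 - ‖w - y‖ ^ 2) + η / 2 * ‖g‖ ^ 2 := by field_simp

theorem stmt_3_general (hX : Convex ℝ X) {T : ℕ} (hT : 1 ≤ T)
    {η : ℕ → ℝ} (hηpos : ∀ t ∈ Finset.Icc 1 T, 0 < η t)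
    (hηanti : ∀ t ∈ Finset.Ico 1 T, η (t + 1) ≤ η t)
    {x g p : ℕ → E}
    (hstep : ∀ t ∈ Finset.Icc 1 T, IsNearestPoint X (x t - η t • g t) (x (t + 1)))
    {f : E → ℝ} (hp : ∀ t ∈ Finset.Icc 1 T, IsProximalPoint f X (x t) (p t))
    {D B : ℝ} (hD : ∀ t ∈ Finset.Icc 1 T, ‖x t - p t‖ ≤ D)
    (hB : ∀ t ∈ Finset.Icc 1 T, f (p t) - f (p T) ≤ B) :
    ∑ t ∈ Finset.Icc 1 T, ⟪g t, x t - p t⟫_ℝ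
      ≤ (D ^ 2 + 2 * B - ‖x (T + 1) - p T‖ ^ 2) / (2 * η T)
        + ∑ t ∈ Finset.Icc 1 T, η t / 2 * ‖g t‖ ^ 2 := by
  have hwnonneg : ∀ t ∈ Finset.Icc 1 T, 0 ≤ (2 * η t)⁻¹ := fun t ht =>
    have := hηpos t ht
    by positivity
  have hwmono : ∀ t ∈ Finset.Ico 1 T, (2 * η t)⁻¹ ≤ (2 * η (t + 1))⁻¹ := fun t ht => by
    have := hηpos (t + 1) (by simp only [Finset.mem_Icc, Finset.mem_Ico] at ht ⊢; omega)
    gcongr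
    exact hηanti t ht
  calc ∑ t ∈ Finset.Icc 1 T, ⟪g t, x t - p t⟫_ℝ
      ≤ ∑ t ∈ Finset.Icc 1 T, ((2 * η t)⁻¹ * (‖x t - p t‖ ^ 2 - ‖x (t + 1) - p t‖ ^ 2)
          + η t / 2 * ‖g t‖ ^ 2) :=
        Finset.sum_le_sum fun t ht =>
          (hstep t ht).inner_gradient_step_le hX (hηpos t ht) (hp t ht).1
    _ = ∑ t ∈ Finset.Icc 1 T, (2 * η t)⁻¹ * (‖x t - p t‖ ^ 2 - ‖x (t + 1) - p t‖ ^ 2)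
          + ∑ t ∈ Finset.Icc 1 T, η t / 2 * ‖g t‖ ^ 2 := Finset.sum_add_distrib
    _ ≤ (D ^ 2 + 2 * B - ‖x (T + 1) - p T‖ ^ 2) / (2 * η T)
          + ∑ t ∈ Finset.Icc 1 T, η t / 2 * ‖g t‖ ^ 2 := by
        rw [div_eq_inv_mul]
        gcongr
        exact sum_Icc_mul_norm_sub_sq_sub_le_of_isProximalPoint hT hwnonneg hwmono hp hD hB

end InnerProductSpace

/-- Online gradient descent with non-increasing step sizes over a nonempty
closed convex set `X ⊆ ℝ^d`, against convex differentiable losses `ℓ^t` (with gradients `g t`),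
satisfies the proximal regret bound for any differentiable `f` whose gradient `f'` is
`L`-Lipschitz with `L < 1`, where `p t` is a proximal point of `f` at `x t` over `X`,
`D = max_{1≤t≤T} ‖x t − p t‖` and `B_f = max_{1≤t≤T} f (p t) − min_{1≤t≤T} f (p t)`. -/
theorem stmt_3 {d : ℕ} {X : Set (EuclideanSpace ℝ (Fin d))}
    (hXne : X.Nonempty) (hXclosed : IsClosed X) (hXconv : Convex ℝ X)
    {T : ℕ} (hT : 1 ≤ T)
    {η : ℕ → ℝ} (hηpos : ∀ t ∈ Finset.Icc 1 T, 0 < η t)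
    (hηmono : ∀ t ∈ Finset.Icc 1 (T - 1), η (t + 1) ≤ η t)
    {ℓ : ℕ → EuclideanSpace ℝ (Fin d) → ℝ}
    {g : ℕ → EuclideanSpace ℝ (Fin d) → EuclideanSpace ℝ (Fin d)}
    (hconv : ∀ t ∈ Finset.Icc 1 T, ConvexOn ℝ Set.univ (ℓ t))
    (hgrad : ∀ t ∈ Finset.Icc 1 T, ∀ a, HasGradientAt (ℓ t) (g t a) a)
    (proj : EuclideanSpace ℝ (Fin d) → EuclideanSpace ℝ (Fin d))
    (hproj : ∀ z, proj z ∈ X ∧ ∀ y ∈ X, ‖proj z - z‖ ≤ ‖y - z‖)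
    {x : ℕ → EuclideanSpace ℝ (Fin d)} (hx1 : x 1 ∈ X)
    (hstep : ∀ t ∈ Finset.Icc 1 T, x (t + 1) = proj (x t - η t • g t (x t)))
    {f : EuclideanSpace ℝ (Fin d) → ℝ}
    {f' : EuclideanSpace ℝ (Fin d) → EuclideanSpace ℝ (Fin d)} {L : ℝ}
    (hfdiff : ∀ a, HasGradientAt f (f' a) a)
    (hL : L < 1) (hfLip : ∀ a b, ‖f' a - f' b‖ ≤ L * ‖a - b‖)
    {p : ℕ → EuclideanSpace ℝ (Fin d)} (hpX : ∀ t ∈ Finset.Icc 1 T, p t ∈ X)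
    (hpmin : ∀ t ∈ Finset.Icc 1 T,
      IsMinOn (fun y => f y + (1 / 2) * ‖y - x t‖ ^ 2) X (p t))
    {D Bf : ℝ}
    (hD : D = (Finset.Icc 1 T).sup' (Finset.nonempty_Icc.mpr hT) fun t => ‖x t - p t‖)
    (hBf : Bf = ((Finset.Icc 1 T).sup' (Finset.nonempty_Icc.mpr hT) fun t => f (p t))
      - (Finset.Icc 1 T).inf' (Finset.nonempty_Icc.mpr hT) fun t => f (p t)) :
    ∑ t ∈ Finset.Icc 1 T, ⟪g t (x t), x t - p t⟫_ℝ
      ≤ (D ^ 2 + 2 * Bf - ‖x (T + 1) - p T‖ ^ 2) / (2 * η T)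
        + ∑ t ∈ Finset.Icc 1 T, η t / 2 * ‖g t (x t)‖ ^ 2 := by
  rw [Finset.Icc_sub_one_right_eq_Ico_of_not_isMin (not_isMin_of_lt hT)] at hηmono
  exact stmt_3_general hXconv hT hηpos hηmono (fun t ht => hstep t ht ▸ hproj _)
    (fun t ht => ⟨hpX t ht, hpmin t ht⟩)
    (fun t ht => hD ▸ Finset.le_sup' (fun t => ‖x t - p t‖) ht)
    (fun t ht => hBf ▸ sub_le_sub (Finset.le_sup' (fun t => f (p t)) ht)
      (Finset.inf'_le (fun t => f (p t)) (Finset.right_mem_Icc.2 hT)))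
end

section
/- Let A be a symmetric positive definite real d×d matrix, b ∈ ℝ^d, and X ⊆ ℝ^d a convex set such that Ax + b ∈ X for every x ∈ X. Suppose that either (i) I − A is positive semidefinite (all eigenvalues of A are at most 1), or (ii) 2A − I is positive definite (all eigenvalues of A exceed 1/2). Define f : ℝ^d → ℝ by f(y) = (1/2)⟨y, (A⁻¹ − I)y⟩ − ⟨A⁻¹b, y⟩. Then for every x ∈ X, the point Ax + b is the unique minimizer over X of the map y ↦ f(y) + (1/2)‖y − x‖²; that is, the symmetric affine endomorphism φ(x) = Ax + b equals the proximal map prox_f on X. -/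
open scoped InnerProductSpace

/-! Completing the square: with `p = A x + b`, the proximal objective of `f` at `x` exceeds its
value at `p` by exactly `½⟪y - p, A⁻¹ (y - p)⟫`, which is positive for `y ≠ p` because `A⁻¹`
inherits positive definiteness from `A`. Hence `p` is the strict minimizer over the whole space, and
so over any set that contains it. -/

theorem isMinOn_and_eq_of_forall_ne_lt {α β : Type*} [Preorder β] {g : α → β} {s : Set α} {p : α}
    (hp : p ∈ s) (hlt : ∀ y ∈ s, y ≠ p → g p < g y) :
    IsMinOn g s p ∧ ∀ y ∈ s, IsMinOn g s y → y = p := by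
  refine ⟨fun y hy => ?_, fun y hy hmin => ?_⟩
  · rcases eq_or_ne y p with rfl | hne
    · exact le_refl (g y)
    · exact (hlt y hy hne).le
  · by_contra hne
    exact (hlt y hy hne).not_ge (hmin hp)

section Prox

variable {E : Type*} [NormedAddCommGroup E] [InnerProductSpace ℝ E]

/-- The objective whose minimizers over a set are the proximal points of `f` at `x`. -/
noncomputable def proxObjective (f : E → ℝ) (x y : E) : ℝ :=
  f y + (1 / 2) * ‖y - x‖ ^ 2

/-- The quadratic function whose proximal map is `x ↦ A x + b`. The argument `B` stands for `A⁻¹`,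
the only way in which `A` enters. -/
noncomputable def affineProxPotential (B : E →ₗ[ℝ] E) (b y : E) : ℝ :=
  (1 / 2) * ⟪y, (B - LinearMap.id : E →ₗ[ℝ] E) y⟫_ℝ - ⟪B b, y⟫_ℝ

theorem proxObjective_affineProxPotential_eq_add {B : E →ₗ[ℝ] E} (hB : B.IsSymmetric) (b p y : E) :
    proxObjective (affineProxPotential B b) (B (p - b)) y =
      proxObjective (affineProxPotential B b) (B (p - b)) p
        + (1 / 2) * ⟪y - p, B (y - p)⟫_ℝ := by
  have hpy : ⟪p, B y⟫_ℝ = ⟪y, B p⟫_ℝ := by rw [← hB p y, real_inner_comm]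
  simp only [proxObjective, affineProxPotential, LinearMap.sub_apply, LinearMap.id_apply, map_sub,
    ← real_inner_self_eq_norm_sq, inner_sub_left, inner_sub_right, real_inner_comm y (B _),
    real_inner_comm p (B _), hpy]
  ring

theorem inner_map_self_pos_of_isPositive_of_injective {T : E →ₗ[ℝ] E} (hT : T.IsPositive)
    (hinj : Function.Injective T) {u : E} (hu : u ≠ 0) : 0 < ⟪T u, u⟫_ℝ := by
  let form : LinearMap.BilinForm ℝ E := innerₗ E ∘ₗ T
  have hsymm : LinearMap.IsSymm form :=
    ⟨fun v w => by simp [form, hT.isSymmetric v w, real_inner_comm]⟩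
  refine (hT.inner_nonneg_left u).lt_of_ne' fun hzero => hu ?_
  have hker : u ∈ LinearMap.ker form :=
    (form.apply_apply_same_eq_zero_iff hT.inner_nonneg_left hsymm).1 hzero
  have hTu : ⟪T u, T u⟫_ℝ = 0 := LinearMap.congr_fun hker (T u)
  exact (map_eq_zero_iff T hinj).1 (inner_self_eq_zero.1 hTu)

theorem inner_symm_self_pos_of_isPositive {A : E ≃ₗ[ℝ] E} (hA : A.toLinearMap.IsPositive) {u : E}
    (hu : u ≠ 0) : 0 < ⟪u, A.symm u⟫_ℝ := by
  simpa using inner_map_self_pos_of_isPositive_of_injective hA A.injective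
    (A.symm.map_ne_zero_iff.2 hu)

theorem proxObjective_affineProxPotential_lt {A : E ≃ₗ[ℝ] E} (hA : A.toLinearMap.IsPositive)
    (b x : E) {y : E} (hy : y ≠ A x + b) :
    proxObjective (affineProxPotential A.symm b) x (A x + b) <
      proxObjective (affineProxPotential A.symm b) x y := by
  have hsquare := proxObjective_affineProxPotential_eq_add hA.isSymmetric.toLinearMap_symm b
    (A x + b) y
  have hgap := inner_symm_self_pos_of_isPositive hA (sub_ne_zero.2 hy)
  simp only [add_sub_cancel_right, LinearEquiv.coe_coe, LinearEquiv.symm_apply_apply] at hsquare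
  linarith

theorem stmt_5_general {A : E ≃ₗ[ℝ] E} (hA : A.toLinearMap.IsPositive) {b x : E} {X : Set E}
    (hmem : A x + b ∈ X) :
    IsMinOn (proxObjective (affineProxPotential A.symm b) x) X (A x + b) ∧
      ∀ y ∈ X, IsMinOn (proxObjective (affineProxPotential A.symm b) x) X y → y = A x + b :=
  isMinOn_and_eq_of_forall_ne_lt hmem fun _ _ => proxObjective_affineProxPotential_lt hA b x

end Prox

/-- The linear automorphism of Euclidean space given by an invertible matrix; its inverse is
definitionally `Matrix.toEuclideanLin A⁻¹`. -/
noncomputable def euclideanLinEquivOfIsUnit {n : Type*} [Fintype n] [DecidableEq n]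
    {A : Matrix n n ℝ} (hA : IsUnit A) : EuclideanSpace ℝ n ≃ₗ[ℝ] EuclideanSpace ℝ n :=
  LinearEquiv.ofLinearMap (Matrix.toEuclideanLin A) (Matrix.toEuclideanLin A⁻¹)
    (by rw [← Matrix.toLpLin_mul_same, Matrix.mul_nonsing_inv A (A.isUnit_iff_isUnit_det.1 hA),
      Matrix.toLpLin_one])
    (by rw [← Matrix.toLpLin_mul_same, Matrix.nonsing_inv_mul A (A.isUnit_iff_isUnit_det.1 hA),
      Matrix.toLpLin_one])

/-- Let `A` be a symmetric positive definite real `d×d` matrix, `b ∈ ℝ^d`,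
and `X ⊆ ℝ^d` a convex set with `A x + b ∈ X` for every `x ∈ X`. If either `I − A` is
positive semidefinite or `2A − I` is positive definite, then with
`f y = (1/2)⟪y, (A⁻¹ − I) y⟫ − ⟪A⁻¹ b, y⟫`, for every `x ∈ X` the point `A x + b` is the
unique minimizer over `X` of `y ↦ f y + (1/2)‖y − x‖²`, i.e. `φ(x) = A x + b` is `prox_f` on
`X`. -/
theorem stmt_5 {d : ℕ} {A : Matrix (Fin d) (Fin d) ℝ}
    (hAsymm : A.IsSymm) (hApd : A.PosDef)
    {b : EuclideanSpace ℝ (Fin d)} {X : Set (EuclideanSpace ℝ (Fin d))}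
    (hXconv : Convex ℝ X)
    (hmaps : ∀ x ∈ X, Matrix.toEuclideanLin A x + b ∈ X)
    (hcond : (1 - A).PosSemidef ∨ (2 • A - 1).PosDef)
    (f : EuclideanSpace ℝ (Fin d) → ℝ)
    (hfdef : f = fun y =>
      (1 / 2) * ⟪y, Matrix.toEuclideanLin (A⁻¹ - 1) y⟫_ℝ
        - ⟪Matrix.toEuclideanLin A⁻¹ b, y⟫_ℝ) :
    ∀ x ∈ X,
      IsMinOn (fun y => f y + (1 / 2) * ‖y - x‖ ^ 2) X (Matrix.toEuclideanLin A x + b) ∧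
      ∀ y ∈ X, IsMinOn (fun y' => f y' + (1 / 2) * ‖y' - x‖ ^ 2) X y →
        y = Matrix.toEuclideanLin A x + b := by
  rw [hfdef, map_sub, Matrix.toLpLin_one]
  exact fun x hx => stmt_5_general (A := euclideanLinEquivOfIsUnit hApd.isUnit)
    (Matrix.isPositive_toEuclideanLin_iff.2 hApd.posSemidef) (hmaps x hx)
end

section
/- Let E be a finite-dimensional real normed space, X ⊆ E a convex set, and φ : E → ℝ a differentiable function that is 1-strongly convex on X with respect to the norm, i.e., φ(t·x + (1−t)·y) ≤ t·φ(x) + (1−t)·φ(y) − (t(1−t)/2)‖x − y‖² for all x, y ∈ X and t ∈ [0,1]. Define the Bregman divergence D_φ(x|y) = φ(x) − φ(y) − Dφ(y)(x − y), where Dφ(y) is the derivative of φ at y. Let G, η > 0, T ≥ 1, and for t = 1, …, T let ℓ^t : E → ℝ be convex and differentiable with ‖Dℓ^t(x^t)‖ ≤ G in the dual (operator) norm. Let x^1 ∈ X and for each t = 1, …, T let the mirror descent iterate x^{t+1} ∈ X minimize x ↦ η·Dℓ^t(x^t)(x) + D_φ(x|x^t) over X. Let f : E → ℝ be convex on X and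 for each t = 1, …, T+1 let p^t ∈ X minimize x ↦ f(x) + D_φ(x|x^t) over X. Then ∑_{t=1}^T Dℓ^t(x^t)(x^t − p^t) ≤ (D_φ(p^1|x^1) + f(p^1) − f(p^{T+1}))/η + ηG²T/2. -/
/-- The Bregman divergence `D_φ(x|y) = φ(x) − φ(y) − Dφ(y)(x − y)` of a differentiable
function `φ`, where `Dφ(y)` is the Fréchet derivative of `φ` at `y`. -/
noncomputable def bregman {E : Type*} [NormedAddCommGroup E] [NormedSpace ℝ E]
    (φ : E → ℝ) (x y : E) : ℝ :=
  φ x - φ y - fderiv ℝ φ y (x - y)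

/-!
Each mirror descent step decreases the value `f (p t) + D_φ(p t|x t)` of the Bregman proximal
problem, up to an error. The optimality condition at `x (t + 1)` and the three-point identity,
with `D_φ(x (t + 1)|x t)` absorbing the displacement by strong convexity, bound
`η * Dℓ^t(x t) (x t - p t)` by `D_φ(p t|x t) - D_φ(p t|x (t + 1)) + (η * G) ^ 2 / 2`. Replacing
`p t` by the minimizer `p (t + 1)` can only lower `f + D_φ(·|x (t + 1))`, so the sum over `t`
telescopes, and the last divergence is nonnegative.
-/

open Filter Topology

section

variable {E : Type*} [NormedAddCommGroup E] [NormedSpace ℝ E] {X : Set E} {φ f : E → ℝ}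
  {g : E →L[ℝ] ℝ} {m : ℝ} {p q x y : E}

lemma bregman_three_point (φ : E → ℝ) (p x y : E) :
    bregman φ p x - bregman φ p y - bregman φ y x
      = (fderiv ℝ φ y - fderiv ℝ φ x) (p - y) := by
  simp only [bregman, sub_apply, map_sub]
  ring

lemma hasFDerivAt_bregman_left (hφ : DifferentiableAt ℝ φ y) (x : E) :
    HasFDerivAt (fun z ↦ bregman φ z x) (fderiv ℝ φ y - fderiv ℝ φ x) y :=
  (hφ.hasFDerivAt.sub_const _).sub
    ((fderiv ℝ φ x).hasFDerivAt.comp y ((hasFDerivAt_id y).sub_const x))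

lemma modulus_le_bregman_of_uniformConvexOn {ψ : ℝ → ℝ} (hφ : UniformConvexOn X ψ φ)
    (hφy : DifferentiableAt ℝ φ y) (hx : x ∈ X) (hy : y ∈ X) :
    ψ ‖x - y‖ ≤ bregman φ x y := by
  have slope_le : ∀ᶠ t in 𝓝[>] (0 : ℝ),
      t⁻¹ • (φ (y + t • (x - y)) - φ y) ≤ φ x - φ y - (1 - t) * ψ ‖x - y‖ := by
    filter_upwards [Ioc_mem_nhdsGT zero_lt_one] with t ⟨ht0, ht1⟩
    have segment_eq : y + t • (x - y) = t • x + (1 - t) • y := by module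
    have hconv := hφ.2 hx hy ht0.le (sub_nonneg.2 ht1) (add_sub_cancel t 1)
    rw [smul_eq_mul, inv_mul_le_iff₀ ht0, segment_eq]
    simp only [smul_eq_mul] at hconv
    linarith
  have bound_tendsto : Tendsto (fun t : ℝ ↦ φ x - φ y - (1 - t) * ψ ‖x - y‖) (𝓝[>] 0)
      (𝓝 (φ x - φ y - (1 - 0) * ψ ‖x - y‖)) :=
    (Continuous.tendsto (by fun_prop) 0).mono_left nhdsWithin_le_nhds
  have deriv_le := le_of_tendsto_of_tendsto
    (hφy.hasFDerivAt.hasLineDerivAt (x - y)).tendsto_slope_zero_right bound_tendsto slope_le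
  rw [bregman]
  linarith

lemma apply_sub_norm_sq_le (g : E →L[ℝ] ℝ) (hm : 0 < m) (v : E) :
    g v - m / 2 * ‖v‖ ^ 2 ≤ ‖g‖ ^ 2 / (2 * m) := by
  have apply_le : g v ≤ ‖g‖ * ‖v‖ := (le_abs_self _).trans (g.le_opNorm v)
  have young : ‖g‖ * ‖v‖ - m / 2 * ‖v‖ ^ 2 ≤ ‖g‖ ^ 2 / (2 * m) := by
    rw [le_div_iff₀ (by positivity)]
    linarith [sq_nonneg (‖g‖ - m * ‖v‖)]
  linarith

lemma apply_sub_le_of_isMinOn_bregman (hX : Convex ℝ X) (hφ : DifferentiableAt ℝ φ y)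
    (hy : y ∈ X) (hp : p ∈ X) (hmin : IsMinOn (fun z ↦ g z + bregman φ z x) X y) :
    g (y - p) ≤ bregman φ p x - bregman φ p y - bregman φ y x := by
  have first_order : 0 ≤ (g + (fderiv ℝ φ y - fderiv ℝ φ x)) (p - y) :=
    hmin.localize.hasFDerivWithinAt_nonneg
      (g.hasFDerivAt.add (hasFDerivAt_bregman_left hφ x)).hasFDerivWithinAt
      (sub_mem_posTangentConeAt_of_segment_subset (hX.segment_subset hy hp))
  rw [add_apply, ← bregman_three_point] at first_order
  rw [← neg_sub p y, map_neg]
  linarith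

lemma mirror_step_regret_le (hm : 0 < m) (hφ : StrongConvexOn X m φ)
    (hφx : DifferentiableAt ℝ φ x) (hφy : DifferentiableAt ℝ φ y)
    (hx : x ∈ X) (hy : y ∈ X) (hp : p ∈ X)
    (hmin : IsMinOn (fun z ↦ g z + bregman φ z x) X y) :
    g (x - p) ≤ bregman φ p x - bregman φ p y + ‖g‖ ^ 2 / (2 * m) := by
  have hthree := apply_sub_le_of_isMinOn_bregman hφ.1 hφy hy hp hmin
  have hstrong : m / 2 * ‖x - y‖ ^ 2 ≤ bregman φ y x := by
    rw [norm_sub_rev]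
    exact modulus_le_bregman_of_uniformConvexOn hφ hφx hy hx
  calc g (x - p) = g (x - y) + g (y - p) := by rw [← map_add, sub_add_sub_cancel]
    _ ≤ bregman φ p x - bregman φ p y + (g (x - y) - m / 2 * ‖x - y‖ ^ 2) := by linarith
    _ ≤ _ := by gcongr; exact apply_sub_norm_sq_le g hm (x - y)

lemma mirror_step_proximal_regret_le (hm : 0 < m) (hφ : StrongConvexOn X m φ)
    (hφx : DifferentiableAt ℝ φ x) (hφy : DifferentiableAt ℝ φ y)
    (hx : x ∈ X) (hy : y ∈ X) (hp : p ∈ X)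
    (hmin : IsMinOn (fun z ↦ g z + bregman φ z x) X y)
    (hq : IsMinOn (fun z ↦ f z + bregman φ z y) X q) :
    g (x - p) ≤ (f p + bregman φ p x) - (f q + bregman φ q y) + ‖g‖ ^ 2 / (2 * m) := by
  have hstep := mirror_step_regret_le hm hφ hφx hφy hx hy hp hmin
  have hprox : f q + bregman φ q y ≤ f p + bregman φ p y := hq hp
  linarith

lemma sum_mirror_step_proximal_regret_le (hm : 0 < m) (hφ : StrongConvexOn X m φ)
    (hφd : ∀ z ∈ X, DifferentiableAt ℝ φ z) {T : ℕ} {g : ℕ → E →L[ℝ] ℝ} {x p : ℕ → E}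
    (hx : ∀ t ∈ Finset.Icc 1 (T + 1), x t ∈ X)
    (hstep : ∀ t ∈ Finset.Icc 1 T,
      IsMinOn (fun z ↦ g t z + bregman φ z (x t)) X (x (t + 1)))
    (hp : ∀ t ∈ Finset.Icc 1 (T + 1), p t ∈ X ∧
      IsMinOn (fun z ↦ f z + bregman φ z (x t)) X (p t)) :
    ∑ t ∈ Finset.Icc 1 T, g t (x t - p t)
      ≤ bregman φ (p 1) (x 1) + f (p 1) - f (p (T + 1))
        + ∑ t ∈ Finset.Icc 1 T, ‖g t‖ ^ 2 / (2 * m) := by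
  let V : ℕ → ℝ := fun t ↦ f (p t) + bregman φ (p t) (x t)
  have step_le : ∀ t ∈ Finset.Icc 1 T,
      g t (x t - p t) ≤ -(V (t + 1) - V t) + ‖g t‖ ^ 2 / (2 * m) := by
    intro t ht
    rw [neg_sub]
    have hxt : x t ∈ X := hx t (by grind)
    have hxt' : x (t + 1) ∈ X := hx (t + 1) (by grind)
    exact mirror_step_proximal_regret_le hm hφ (hφd _ hxt) (hφd _ hxt') hxt hxt'
      (hp t (by grind)).1 (hstep t ht) (hp (t + 1) (by grind)).2
  have telescope : ∑ t ∈ Finset.Icc 1 T, (V (t + 1) - V t) = V (T + 1) - V 1 := by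
    rw [← Finset.Ico_add_one_right_eq_Icc, Finset.sum_Ico_sub _ (by lia)]
  have sum_le := Finset.sum_le_sum step_le
  rw [Finset.sum_add_distrib, Finset.sum_neg_distrib, telescope] at sum_le
  have last_mem : T + 1 ∈ Finset.Icc 1 (T + 1) := by simp
  have last_nonneg : 0 ≤ bregman φ (p (T + 1)) (x (T + 1)) :=
    le_trans (by positivity) (modulus_le_bregman_of_uniformConvexOn hφ (hφd _ (hx _ last_mem))
      (hp _ last_mem).1 (hx _ last_mem))
  simp only [V] at sum_le
  linarith

end

theorem stmt_8_general {E : Type*} [NormedAddCommGroup E] [NormedSpace ℝ E] {X : Set E}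
    {φ : E → ℝ} {m : ℝ} (hm : 0 < m) (hφ : StrongConvexOn X m φ)
    (hφd : ∀ z ∈ X, DifferentiableAt ℝ φ z) {G η : ℝ} (hη : 0 < η) {T : ℕ}
    {g : ℕ → E →L[ℝ] ℝ} (hg : ∀ t ∈ Finset.Icc 1 T, ‖g t‖ ≤ G) {x : ℕ → E} (hx1 : x 1 ∈ X)
    (hstep : ∀ t ∈ Finset.Icc 1 T, x (t + 1) ∈ X ∧
      IsMinOn (fun z ↦ η * g t z + bregman φ z (x t)) X (x (t + 1)))
    {f : E → ℝ} {p : ℕ → E}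
    (hp : ∀ t ∈ Finset.Icc 1 (T + 1), p t ∈ X ∧
      IsMinOn (fun z ↦ f z + bregman φ z (x t)) X (p t)) :
    ∑ t ∈ Finset.Icc 1 T, g t (x t - p t)
      ≤ (bregman φ (p 1) (x 1) + f (p 1) - f (p (T + 1))) / η + η * G ^ 2 * T / (2 * m) := by
  have hx : ∀ t ∈ Finset.Icc 1 (T + 1), x t ∈ X := by
    rintro (_ | _ | t) ht
    · simp at ht
    · exact hx1
    · exact (hstep (t + 1) (by grind)).1
  have regret_le := sum_mirror_step_proximal_regret_le (g := fun t ↦ η • g t) hm hφ hφd hx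
    (fun t ht ↦ (hstep t ht).2) hp
  have norm_sq_sum_le : ∑ t ∈ Finset.Icc 1 T, ‖η • g t‖ ^ 2 / (2 * m)
      ≤ T * ((η * G) ^ 2 / (2 * m)) := by
    have norm_sq_le : ∀ t ∈ Finset.Icc 1 T,
        ‖η • g t‖ ^ 2 / (2 * m) ≤ (η * G) ^ 2 / (2 * m) := by
      intro t ht
      rw [norm_smul, Real.norm_of_nonneg hη.le]
      gcongr
      exact hg t ht
    simpa using Finset.sum_le_card_nsmul _ _ _ norm_sq_le
  simp only [smul_apply, smul_eq_mul, ← Finset.mul_sum] at regret_le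
  calc ∑ t ∈ Finset.Icc 1 T, g t (x t - p t)
      ≤ (bregman φ (p 1) (x 1) + f (p 1) - f (p (T + 1)) + T * ((η * G) ^ 2 / (2 * m))) / η := by
        rw [le_div_iff₀' hη]
        linarith
    _ = _ := by field_simp

/-- Mirror descent with a differentiable distance-generating function `φ`
that is 1-strongly convex on a convex set `X` in a finite-dimensional real normed space,
run with step size `η > 0` against convex differentiable losses `ℓ^t` whose derivatives at
the iterates have dual norm at most `G`, satisfies the Bregman proximal regret bound: with
`p t` minimizing `z ↦ f z + D_φ(z|x t)` over `X` for a function `f` convex on `X`,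
`∑_{t=1}^T Dℓ^t(x^t)(x^t − p^t) ≤ (D_φ(p¹|x¹) + f(p¹) − f(p^{T+1}))/η + ηG²T/2`. -/
theorem stmt_8 {E : Type*} [NormedAddCommGroup E] [NormedSpace ℝ E]
    [FiniteDimensional ℝ E]
    {X : Set E} (hXconv : Convex ℝ X)
    {φ : E → ℝ} (hφdiff : Differentiable ℝ φ)
    (hφsc : ∀ x ∈ X, ∀ y ∈ X, ∀ t : ℝ, 0 ≤ t → t ≤ 1 →
      φ (t • x + (1 - t) • y)
        ≤ t * φ x + (1 - t) * φ y - t * (1 - t) / 2 * ‖x - y‖ ^ 2)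
    {G η : ℝ} (hG : 0 < G) (hη : 0 < η) {T : ℕ} (hT : 1 ≤ T)
    {ℓ : ℕ → E → ℝ}
    (hconv : ∀ t ∈ Finset.Icc 1 T, ConvexOn ℝ Set.univ (ℓ t))
    (hdiff : ∀ t ∈ Finset.Icc 1 T, Differentiable ℝ (ℓ t))
    {x : ℕ → E} (hx1 : x 1 ∈ X)
    (hGbound : ∀ t ∈ Finset.Icc 1 T, ‖fderiv ℝ (ℓ t) (x t)‖ ≤ G)
    (hstep : ∀ t ∈ Finset.Icc 1 T, x (t + 1) ∈ X ∧
      IsMinOn (fun z => η * fderiv ℝ (ℓ t) (x t) z + bregman φ z (x t)) X (x (t + 1)))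
    {f : E → ℝ} (hf : ConvexOn ℝ X f)
    {p : ℕ → E}
    (hp : ∀ t ∈ Finset.Icc 1 (T + 1), p t ∈ X ∧
      IsMinOn (fun z => f z + bregman φ z (x t)) X (p t)) :
    ∑ t ∈ Finset.Icc 1 T, fderiv ℝ (ℓ t) (x t) (x t - p t)
      ≤ (bregman φ (p 1) (x 1) + f (p 1) - f (p (T + 1))) / η
        + η * G ^ 2 * T / 2 := by
  have hφ : StrongConvexOn X 1 φ := by
    refine ⟨hXconv, fun u hu v hv a b ha hb hab ↦ ?_⟩
    obtain rfl : b = 1 - a := by linarith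
    exact (hφsc u hu v hv a ha (sub_nonneg.1 hb)).trans_eq (by simp only [smul_eq_mul]; ring)
  simpa using stmt_8_general one_pos hφ (fun z _ ↦ hφdiff z) hη hGbound hx1 hstep hp
end

section
/- Let G be a simple graph on d ≥ 3 vertices with adjacency matrix A and clique number ω(G), let X = {x ∈ ℝ^d : x_i ≥ 0 for all i and ∑_i x_i ≤ 1}, and for an integer k with 1 ≤ k ≤ d define f_k(x) = xᵀAx − (1 − 1/k)(∑_i x_i)². Then: (i) −1 ≤ f_k(x) ≤ 1 for every x ∈ X; and (ii) if k > ω(G), then f_k(x) ≤ 0 for every x ∈ X. -/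
/-- The feasible set `X = {x ∈ ℝ^d : x_i ≥ 0 ∀i, ∑_i x_i ≤ 1}`. -/
def stdCorner (d : ℕ) : Set (EuclideanSpace ℝ (Fin d)) :=
  {x | (∀ i, 0 ≤ x i) ∧ ∑ i, x i ≤ 1}

/-- The function `f_k(x) = xᵀ A x − (1 − 1/k)(∑_i x_i)²`, where `A` is the adjacency
matrix of the graph `G`. -/
noncomputable def fkFun {d : ℕ} (G : SimpleGraph (Fin d)) [DecidableRel G.Adj] (k : ℕ)
    (x : EuclideanSpace ℝ (Fin d)) : ℝ :=
  (∑ i, ∑ j, SimpleGraph.adjMatrix ℝ G i j * x i * x j)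
    - (1 - 1 / (k : ℝ)) * (∑ i, x i) ^ 2

/-!
The second part is the Motzkin–Straus inequality. If two non-adjacent vertices carry positive
weight, then the quadratic form of the adjacency matrix is affine along the direction that moves
weight from one to the other, so all the weight of one of them can be moved to the other without
decreasing the form. Iterating, the support becomes a clique, hence has at most `ω(G)` elements, and
Cauchy–Schwarz on the support bounds the form.
-/

open Matrix Function

theorem dotProduct_mulVec_add_self_of_isSymm {V R : Type*} [Fintype V] [CommSemiring R]
    {A : Matrix V V R} (hA : A.IsSymm) (x w : V → R) :
    (x + w) ⬝ᵥ A *ᵥ (x + w) = x ⬝ᵥ A *ᵥ x + 2 * (w ⬝ᵥ A *ᵥ x) + w ⬝ᵥ A *ᵥ w := by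
  have hcomm : x ⬝ᵥ A *ᵥ w = w ⬝ᵥ A *ᵥ x := by
    rw [← dotProduct_transpose_mulVec, hA.eq]
  rw [mulVec_add, add_dotProduct, dotProduct_add, dotProduct_add, hcomm]
  ring

theorem sq_sum_le_ncard_support_mul_sum_sq {V R : Type*} [Fintype V] [CommRing R] [LinearOrder R]
    [IsStrictOrderedRing R] (x : V → R) :
    (∑ i, x i) ^ 2 ≤ (support x).ncard * ∑ i, x i ^ 2 := by
  classical
  have hsum : ∑ i ∈ (support x).toFinset, x i = ∑ i, x i :=
    Finset.sum_subset (Finset.subset_univ _) fun i _ hi ↦ by simpa using hi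
  calc (∑ i, x i) ^ 2
      = (∑ i ∈ (support x).toFinset, x i) ^ 2 := by rw [hsum]
    _ ≤ (support x).toFinset.card * ∑ i ∈ (support x).toFinset, x i ^ 2 :=
        sq_sum_le_card_mul_sum_sq
    _ ≤ (support x).ncard * ∑ i, x i ^ 2 := by
        rw [Set.ncard_eq_toFinset_card']
        gcongr
        exact Finset.subset_univ _

theorem sq_sum_le_mul_sum_sq_of_isClique_support {V R : Type*} [Fintype V] [CommRing R]
    [LinearOrder R] [IsStrictOrderedRing R] {G : SimpleGraph V} {k : ℕ} (hk : G.cliqueNum ≤ k)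
    {x : V → R} (hx : G.IsClique (support x)) : (∑ i, x i) ^ 2 ≤ k * ∑ i, x i ^ 2 := by
  classical
  have hcard : (support x).ncard ≤ k := by
    rw [Set.ncard_eq_toFinset_card']
    exact (SimpleGraph.IsClique.card_le_cliqueNum (tc := by simpa using hx)).trans hk
  refine (sq_sum_le_ncard_support_mul_sum_sq x).trans ?_
  gcongr

theorem exists_not_adj_and_le_of_not_isClique {V α : Type*} [LinearOrder α] {G : SimpleGraph V}
    {s : Set V} (hs : ¬G.IsClique s) (g : V → α) :
    ∃ u ∈ s, ∃ v ∈ s, u ≠ v ∧ ¬G.Adj u v ∧ g v ≤ g u := by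
  obtain ⟨u, hu, v, hv, huv, hadj⟩ : ∃ u ∈ s, ∃ v ∈ s, u ≠ v ∧ ¬G.Adj u v := by
    simpa [SimpleGraph.IsClique, Set.Pairwise] using hs
  rcases le_total (g v) (g u) with hle | hle
  · exact ⟨u, hu, v, hv, huv, hadj, hle⟩
  · exact ⟨v, hv, u, hu, huv.symm, fun h ↦ hadj h.symm, hle⟩

section transferWeight

variable {V R : Type*} [DecidableEq V] [AddCommGroup R]

/-- The weight vector obtained from `x` by moving the whole weight of the vertex `v` to the vertex
`u`. It is written as a perturbation of `x` so that quadratic forms can be expanded at `x`. -/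
def transferWeight (x : V → R) (u v : V) : V → R :=
  x + (Pi.single u (x v) - Pi.single v (x v))

variable {x : V → R} {u v : V}

theorem sum_transferWeight [Fintype V] (x : V → R) (u v : V) :
    ∑ i, transferWeight x u v i = ∑ i, x i := by
  simp [transferWeight, Finset.sum_add_distrib]

theorem transferWeight_apply_source (huv : u ≠ v) : transferWeight x u v v = 0 := by
  simp [transferWeight, huv]

theorem transferWeight_nonneg [PartialOrder R] [IsOrderedAddMonoid R] (hx : 0 ≤ x) (huv : u ≠ v) :
    0 ≤ transferWeight x u v := by
  intro i
  rcases eq_or_ne i v with rfl | hiv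
  · exact (transferWeight_apply_source huv).ge
  · have hsingle : 0 ≤ (Pi.single u (x v) : V → R) := Pi.single_nonneg.2 (hx v)
    simpa [transferWeight, hiv] using add_nonneg (hx i) (hsingle i)

theorem support_transferWeight_ssubset (hu : x u ≠ 0) (hv : x v ≠ 0) (huv : u ≠ v) :
    support (transferWeight x u v) ⊂ support x := by
  have hsubset : support (transferWeight x u v) ⊆ support x := fun i hi hxi ↦ by
    have hiu : i ≠ u := fun h ↦ hu (h ▸ hxi)
    have hiv : i ≠ v := fun h ↦ hv (h ▸ hxi)
    exact hi (by simp [transferWeight, hxi, hiu, hiv])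
  exact (Set.ssubset_iff_of_subset hsubset).2
    ⟨v, hv, fun h ↦ h (transferWeight_apply_source huv)⟩

end transferWeight

section adjMatrix

variable {V R : Type*} [Fintype V] [CommRing R] [LinearOrder R] [IsStrictOrderedRing R]
  (G : SimpleGraph V) [DecidableRel G.Adj] {x : V → R}

theorem dotProduct_adjMatrix_mulVec_self_nonneg (hx : 0 ≤ x) :
    0 ≤ x ⬝ᵥ G.adjMatrix R *ᵥ x := by
  rw [G.dotProduct_mulVec_adjMatrix]
  refine Finset.sum_nonneg fun i _ ↦ Finset.sum_nonneg fun j _ ↦ ?_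
  split_ifs
  exacts [mul_nonneg (hx i) (hx j), le_rfl]

theorem dotProduct_adjMatrix_mulVec_self_add_sum_sq_le (hx : 0 ≤ x) :
    x ⬝ᵥ G.adjMatrix R *ᵥ x + ∑ i, x i ^ 2 ≤ (∑ i, x i) ^ 2 := by
  classical
  have hall_ones : x ⬝ᵥ (of 1 : Matrix V V R) *ᵥ x = (∑ i, x i) ^ 2 := by
    simp [dotProduct, mulVec, sq, Finset.sum_mul]
  have hself : x ⬝ᵥ x = ∑ i, x i ^ 2 := by simp [dotProduct, sq]
  calc x ⬝ᵥ G.adjMatrix R *ᵥ x + ∑ i, x i ^ 2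
      ≤ x ⬝ᵥ G.adjMatrix R *ᵥ x + ∑ i, x i ^ 2 + x ⬝ᵥ Gᶜ.adjMatrix R *ᵥ x :=
        le_add_of_nonneg_right (dotProduct_adjMatrix_mulVec_self_nonneg Gᶜ hx)
    _ = x ⬝ᵥ (1 + G.adjMatrix R + (G.adjMatrix R).compl) *ᵥ x := by
        rw [G.compl_adjMatrix_eq_adjMatrix_compl R, add_mulVec, add_mulVec, one_mulVec,
          dotProduct_add, dotProduct_add, hself, add_comm (∑ i, x i ^ 2)]
    _ = (∑ i, x i) ^ 2 := by
        rw [G.one_add_adjMatrix_add_compl_adjMatrix_eq_of_one R, hall_ones]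

theorem dotProduct_adjMatrix_mulVec_self_le_sq_sum (hx : 0 ≤ x) :
    x ⬝ᵥ G.adjMatrix R *ᵥ x ≤ (∑ i, x i) ^ 2 :=
  (le_add_of_nonneg_right (Finset.sum_nonneg fun i _ ↦ sq_nonneg (x i))).trans
    (dotProduct_adjMatrix_mulVec_self_add_sum_sq_le G hx)

variable {G}

theorem dotProduct_adjMatrix_mulVec_self_le_transferWeight [DecidableEq V] {u v : V} (hv : 0 ≤ x v)
    (hadj : ¬G.Adj u v) (hle : (G.adjMatrix R *ᵥ x) v ≤ (G.adjMatrix R *ᵥ x) u) :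
    x ⬝ᵥ G.adjMatrix R *ᵥ x ≤
      transferWeight x u v ⬝ᵥ G.adjMatrix R *ᵥ transferWeight x u v := by
  set w : V → R := Pi.single u (x v) - Pi.single v (x v) with hw
  have hquadratic : w ⬝ᵥ G.adjMatrix R *ᵥ w = 0 := by
    simp [hw, mulVec_sub, sub_dotProduct, hadj, G.adj_comm v u]
  have hlinear : 0 ≤ w ⬝ᵥ G.adjMatrix R *ᵥ x := by
    rw [hw, sub_dotProduct, single_dotProduct, single_dotProduct, sub_nonneg]
    exact mul_le_mul_of_nonneg_left hle hv
  rw [transferWeight, ← hw, dotProduct_mulVec_add_self_of_isSymm G.isSymm_adjMatrix, hquadratic]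
  linarith

theorem exists_isClique_support_sum_eq_and_le (hx : 0 ≤ x) :
    ∃ y : V → R, 0 ≤ y ∧ G.IsClique (support y) ∧ ∑ i, y i = ∑ i, x i ∧
      x ⬝ᵥ G.adjMatrix R *ᵥ x ≤ y ⬝ᵥ G.adjMatrix R *ᵥ y := by
  classical
  induction hn : (support x).ncard using Nat.strong_induction_on generalizing x with
  | _ n ih =>
    by_cases hclique : G.IsClique (support x)
    · exact ⟨x, hx, hclique, rfl, le_rfl⟩
    obtain ⟨u, hu, v, hv, huv, hadj, hle⟩ :=
      exists_not_adj_and_le_of_not_isClique hclique (G.adjMatrix R *ᵥ x)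
    have hcard : (support (transferWeight x u v)).ncard < n :=
      hn ▸ Set.ncard_lt_ncard (support_transferWeight_ssubset hu hv huv)
    obtain ⟨y, hy, hyclique, hysum, hyle⟩ := ih _ hcard (transferWeight_nonneg hx huv) rfl
    exact ⟨y, hy, hyclique, hysum.trans (sum_transferWeight x u v),
      (dotProduct_adjMatrix_mulVec_self_le_transferWeight (hx v) hadj hle).trans hyle⟩

theorem mul_dotProduct_adjMatrix_mulVec_self_le_of_cliqueNum_le {k : ℕ} (hk : G.cliqueNum ≤ k)
    (hx : 0 ≤ x) :
    k * (x ⬝ᵥ G.adjMatrix R *ᵥ x) ≤ (k - 1) * (∑ i, x i) ^ 2 := by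
  obtain ⟨y, hy, hclique, hsum, hle⟩ := exists_isClique_support_sum_eq_and_le (G := G) hx
  have hcauchy := sq_sum_le_mul_sum_sq_of_isClique_support hk hclique
  calc k * (x ⬝ᵥ G.adjMatrix R *ᵥ x)
      ≤ k * (y ⬝ᵥ G.adjMatrix R *ᵥ y) := by gcongr
    _ ≤ k * ((∑ i, y i) ^ 2 - ∑ i, y i ^ 2) := by
        gcongr
        exact le_sub_iff_add_le.2 (dotProduct_adjMatrix_mulVec_self_add_sum_sq_le G hy)
    _ ≤ (k - 1) * (∑ i, y i) ^ 2 := by linarith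
    _ = (k - 1) * (∑ i, x i) ^ 2 := by rw [hsum]

end adjMatrix

theorem fkFun_eq_dotProduct_mulVec {d : ℕ} (G : SimpleGraph (Fin d)) [DecidableRel G.Adj] (k : ℕ)
    (x : EuclideanSpace ℝ (Fin d)) :
    fkFun G k x = x ⬝ᵥ G.adjMatrix ℝ *ᵥ x - (1 - 1 / (k : ℝ)) * (∑ i, x i) ^ 2 := by
  simp [fkFun, G.dotProduct_mulVec_adjMatrix]

theorem stmt_13_general {V K : Type*} [Fintype V] [Field K] [LinearOrder K] [IsStrictOrderedRing K]
    (G : SimpleGraph V) [DecidableRel G.Adj] {k : ℕ} (hk : 1 ≤ k) {x : V → K} (hx : 0 ≤ x)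
    (hsum : ∑ i, x i ≤ 1) :
    (-1 ≤ x ⬝ᵥ G.adjMatrix K *ᵥ x - (1 - 1 / (k : K)) * (∑ i, x i) ^ 2 ∧
        x ⬝ᵥ G.adjMatrix K *ᵥ x - (1 - 1 / (k : K)) * (∑ i, x i) ^ 2 ≤ 1) ∧
      (G.cliqueNum ≤ k →
        x ⬝ᵥ G.adjMatrix K *ᵥ x - (1 - 1 / (k : K)) * (∑ i, x i) ^ 2 ≤ 0) := by
  have hk_one : (1 : K) ≤ k := mod_cast hk
  have hk_pos : (0 : K) < k := zero_lt_one.trans_le hk_one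
  have hcoeff_nonneg : 0 ≤ 1 - 1 / (k : K) := sub_nonneg.2 ((div_le_one hk_pos).2 hk_one)
  have hcoeff_le_one : 1 - 1 / (k : K) ≤ 1 := sub_le_self _ (by positivity)
  have hsq_le_one : (∑ i, x i) ^ 2 ≤ 1 := pow_le_one₀ (Finset.sum_nonneg fun i _ ↦ hx i) hsum
  have hform_nonneg := dotProduct_adjMatrix_mulVec_self_nonneg G hx
  have hform_le := dotProduct_adjMatrix_mulVec_self_le_sq_sum G hx
  have hterm_nonneg := mul_nonneg hcoeff_nonneg (sq_nonneg (∑ i, x i))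
  have hterm_le_one := mul_le_one₀ hcoeff_le_one (sq_nonneg (∑ i, x i)) hsq_le_one
  refine ⟨⟨by linarith, by linarith⟩, fun hclique ↦ sub_nonpos.2 ?_⟩
  rw [one_sub_div hk_pos.ne', div_mul_eq_mul_div, le_div_iff₀' hk_pos]
  exact mul_dotProduct_adjMatrix_mulVec_self_le_of_cliqueNum_le hclique hx

/-- For a simple graph `G` on `d ≥ 3` vertices with clique number `ω(G)`,
and `1 ≤ k ≤ d`: (i) `−1 ≤ f_k(x) ≤ 1` on `X`; (ii) if `k > ω(G)` then `f_k(x) ≤ 0` on `X`. -/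
theorem stmt_13 {d : ℕ} (hd : 3 ≤ d) (G : SimpleGraph (Fin d)) [DecidableRel G.Adj]
    {k : ℕ} (hk1 : 1 ≤ k) (hkd : k ≤ d) :
    (∀ x ∈ stdCorner d, -1 ≤ fkFun G k x ∧ fkFun G k x ≤ 1) ∧
      (G.cliqueNum < k → ∀ x ∈ stdCorner d, fkFun G k x ≤ 0) := by
  simp only [fkFun_eq_dotProduct_mulVec]
  exact ⟨fun x hx ↦ (stmt_13_general G hk1 hx.1 hx.2).1,
    fun hclique x hx ↦ (stmt_13_general G hk1 hx.1 hx.2).2 hclique.le⟩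
end

section
/- Let G be a simple graph on d ≥ 3 vertices with adjacency matrix A and clique number ω(G), let X = {x ∈ ℝ^d : x_i ≥ 0 for all i and ∑_i x_i ≤ 1}, and for an integer k with 1 ≤ k ≤ d define f_k(x) = xᵀAx − (1 − 1/k)(∑_i x_i)². For every δ ∈ (0,1] and every integer k with 1 ≤ k < ω(G), every x ∈ X with ∑_i x_i ≤ δ/2 is not a (δ²/(8d²), δ)-local maximizer of f_k over X; that is, there exists x′ ∈ X with ‖x′ − x‖₂ ≤ δ and f_k(x′) > f_k(x) + δ²/(8d²). -/
/-!
Let `E = δ² / (8d²)`. Since `f_k` is homogeneous of degree two, moving from `x` to `2x` gains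
`3 f_k(x)`, which suffices when `f_k(x) > E / 3`. Otherwise move to `y`, the uniform distribution
on a maximum clique scaled to mass `δ / 2`: the Motzkin–Straus value of a clique gives
`f_k(y) = (δ² / 4) (1 / k - 1 / ω) ≥ δ² / (4d²) = 2E > f_k(x) + E`. Both moves have length at
most `δ`, because the Euclidean norm of a nonnegative vector is at most its mass.
-/

section EuclideanSpace

variable {ι : Type*} [Fintype ι]

theorem norm_le_sum_of_nonneg {x : EuclideanSpace ℝ ι} (hx : ∀ i, 0 ≤ x i) :
    ‖x‖ ≤ ∑ i, x i := by
  refine le_of_sq_le_sq ?_ (Finset.sum_nonneg fun i _ ↦ hx i)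
  rw [EuclideanSpace.real_norm_sq_eq]
  exact Finset.sum_sq_le_sq_sum_of_nonneg fun i _ ↦ hx i

theorem sum_smul_apply (c : ℝ) (x : EuclideanSpace ℝ ι) : ∑ i, (c • x) i = c * ∑ i, x i := by
  simp only [PiLp.smul_apply, smul_eq_mul, Finset.mul_sum]

end EuclideanSpace

section UniformVector

variable {ι : Type*} [DecidableEq ι]

/-- The uniform probability vector on the finite set `s`; it is `0` if `s` is empty. -/
noncomputable def uniformVector (s : Finset ι) : EuclideanSpace ℝ ι :=
  WithLp.toLp 2 fun i ↦ if i ∈ s then (s.card : ℝ)⁻¹ else 0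

theorem uniformVector_apply (s : Finset ι) (i : ι) :
    uniformVector s i = if i ∈ s then (s.card : ℝ)⁻¹ else 0 :=
  rfl

theorem uniformVector_nonneg (s : Finset ι) (i : ι) : 0 ≤ uniformVector s i := by
  rw [uniformVector_apply]
  positivity

theorem support_uniformVector_subset (s : Finset ι) :
    Function.support (uniformVector s) ⊆ s := fun i hi ↦ by
  by_contra his
  exact hi (if_neg his)

variable [Fintype ι]

theorem sum_uniformVector {s : Finset ι} (hs : s.Nonempty) : ∑ i, uniformVector s i = 1 := by
  have hcard : (s.card : ℝ) ≠ 0 := mod_cast hs.card_ne_zero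
  simp [uniformVector_apply, hcard]

theorem sum_sq_uniformVector {s : Finset ι} (hs : s.Nonempty) :
    ∑ i, uniformVector s i ^ 2 = 1 / (s.card : ℝ) := by
  have hcard : (s.card : ℝ) ≠ 0 := mod_cast hs.card_ne_zero
  simp [uniformVector_apply, ite_pow, sq, hcard]

end UniformVector

section Clique

variable {V : Type*} [Fintype V] {G : SimpleGraph V}

theorem cliqueNum_le_card : G.cliqueNum ≤ Fintype.card V := by
  obtain ⟨s, hs⟩ := G.exists_isNClique_cliqueNum
  exact hs.card_eq ▸ s.card_le_univ

variable [DecidableRel G.Adj]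

theorem sum_adjMatrix_mul_mul_of_isClique_support {R : Type*} [CommRing R] {x : V → R}
    (hx : G.IsClique (Function.support x)) :
    ∑ i, ∑ j, G.adjMatrix R i j * x i * x j = (∑ i, x i) ^ 2 - ∑ i, x i ^ 2 := by
  classical
  have hterm (i j : V) :
      G.adjMatrix R i j * x i * x j = x i * x j - if i = j then x i ^ 2 else 0 := by
    rcases eq_or_ne i j with rfl | hij
    · simp [sq]
    by_cases hi : x i = 0
    · simp [hi]
    by_cases hj : x j = 0
    · simp [hj, hij]
    simp [hx hi hj hij, hij]
  simp only [hterm, Finset.sum_sub_distrib, Finset.sum_ite_eq, Finset.mem_univ, if_true]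
  rw [sq (∑ i, x i), Finset.sum_mul_sum]

theorem sum_adjMatrix_mul_uniformVector [DecidableEq V] {s : Finset V} (hs : G.IsClique s)
    (hne : s.Nonempty) :
    ∑ i, ∑ j, G.adjMatrix ℝ i j * uniformVector s i * uniformVector s j
      = 1 - 1 / (s.card : ℝ) := by
  rw [sum_adjMatrix_mul_mul_of_isClique_support (hs.subset (support_uniformVector_subset s)),
    sum_uniformVector hne, sum_sq_uniformVector hne, one_pow]

end Clique

section FkFun

variable {d : ℕ} (G : SimpleGraph (Fin d)) [DecidableRel G.Adj] (k : ℕ)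

theorem smul_mem_stdCorner {c : ℝ} {x : EuclideanSpace ℝ (Fin d)} (hc : 0 ≤ c)
    (hx : ∀ i, 0 ≤ x i) (hsum : c * ∑ i, x i ≤ 1) : c • x ∈ stdCorner d :=
  ⟨fun i ↦ mul_nonneg hc (hx i), (sum_smul_apply c x).trans_le hsum⟩

theorem fkFun_smul (c : ℝ) (x : EuclideanSpace ℝ (Fin d)) :
    fkFun G k (c • x) = c ^ 2 * fkFun G k x := by
  have hterm (i j : Fin d) : G.adjMatrix ℝ i j * (c • x) i * (c • x) j
      = c ^ 2 * (G.adjMatrix ℝ i j * x i * x j) := by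
    simp only [PiLp.smul_apply, smul_eq_mul]
    ring
  simp only [fkFun, hterm, sum_smul_apply, ← Finset.mul_sum]
  ring

variable {G} in
theorem fkFun_uniformVector {s : Finset (Fin d)} (hs : G.IsClique s) (hne : s.Nonempty) :
    fkFun G k (uniformVector s) = 1 / (k : ℝ) - 1 / (s.card : ℝ) := by
  rw [fkFun, sum_adjMatrix_mul_uniformVector hs hne, sum_uniformVector hne]
  ring

end FkFun

theorem one_div_sq_le_one_div_sub_one_div {k w d : ℕ} (hk : 0 < k) (hkw : k < w) (hwd : w ≤ d) :
    1 / (d : ℝ) ^ 2 ≤ 1 / (k : ℝ) - 1 / (w : ℝ) := by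
  have hk0 : (0 : ℝ) < k := mod_cast hk
  have hw0 : (0 : ℝ) < w := mod_cast hk.trans hkw
  have hgap : (1 : ℝ) ≤ w - k := by
    rw [le_sub_iff_add_le']
    exact_mod_cast hkw
  have hmul : (k : ℝ) * w ≤ (d : ℝ) ^ 2 := by
    rw [sq]
    exact_mod_cast Nat.mul_le_mul (hkw.le.trans hwd) hwd
  calc 1 / (d : ℝ) ^ 2 ≤ (w - k) / (k * w) :=
      div_le_div₀ (zero_le_one.trans hgap) hgap (mul_pos hk0 hw0) hmul
    _ = 1 / (k : ℝ) - 1 / (w : ℝ) := by field_simp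

theorem exists_mem_stdCorner_sum_eq_and_le_fkFun {d : ℕ} (G : SimpleGraph (Fin d))
    [DecidableRel G.Adj] {k : ℕ} (hk1 : 1 ≤ k) (hk : k < G.cliqueNum) {c : ℝ} (hc0 : 0 ≤ c)
    (hc1 : c ≤ 1) :
    ∃ y ∈ stdCorner d, ∑ i, y i = c ∧ c ^ 2 / (d : ℝ) ^ 2 ≤ fkFun G k y := by
  obtain ⟨s, hs⟩ := G.exists_isNClique_cliqueNum
  have hne : s.Nonempty := Finset.card_pos.1 (hs.card_eq ▸ Nat.zero_lt_of_lt hk)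
  have hsum : c * ∑ i, uniformVector s i = c := by rw [sum_uniformVector hne, mul_one]
  refine ⟨c • uniformVector s, smul_mem_stdCorner hc0 (uniformVector_nonneg s)
    (hsum.trans_le hc1), (sum_smul_apply c _).trans hsum, ?_⟩
  rw [fkFun_smul, fkFun_uniformVector k hs.isClique hne, hs.card_eq, div_eq_mul_one_div]
  gcongr
  exact one_div_sq_le_one_div_sub_one_div hk1 hk (cliqueNum_le_card.trans_eq (Fintype.card_fin d))

/-- For every `δ ∈ (0,1]` and every integer `k` with
`1 ≤ k < ω(G)`, every `x ∈ X` with `∑_i x_i ≤ δ/2` is not a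
`(δ²/(8d²), δ)`-local maximizer of `f_k` over `X`: there is `x′ ∈ X` with
`‖x′ − x‖₂ ≤ δ` and `f_k(x′) > f_k(x) + δ²/(8d²)`. -/
theorem stmt_15 {d : ℕ} (hd : 3 ≤ d) (G : SimpleGraph (Fin d)) [DecidableRel G.Adj]
    {δ : ℝ} (hδ0 : 0 < δ) (hδ1 : δ ≤ 1)
    {k : ℕ} (hk1 : 1 ≤ k) (hk : k < G.cliqueNum) (hkd : k ≤ d)
    {x : EuclideanSpace ℝ (Fin d)} (hx : x ∈ stdCorner d)
    (hxsmall : ∑ i, x i ≤ δ / 2) :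
    ∃ x' ∈ stdCorner d, ‖x' - x‖ ≤ δ ∧
      fkFun G k x + δ ^ 2 / (8 * (d : ℝ) ^ 2) < fkFun G k x' := by
  have hxnorm : ‖x‖ ≤ δ / 2 := (norm_le_sum_of_nonneg hx.1).trans hxsmall
  by_cases hgain : δ ^ 2 / (8 * (d : ℝ) ^ 2) < 3 * fkFun G k x
  · refine ⟨(2 : ℝ) • x, smul_mem_stdCorner zero_le_two hx.1 (by linarith), ?_, ?_⟩
    · rw [two_smul, add_sub_cancel_right]
      linarith
    · rw [fkFun_smul]
      linarith
  · obtain ⟨y, hy, hysum, hyval⟩ :=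
      exists_mem_stdCorner_sum_eq_and_le_fkFun G hk1 hk (half_pos hδ0).le
        (by linarith : δ / 2 ≤ 1)
    have hynorm : ‖y‖ ≤ δ / 2 := (norm_le_sum_of_nonneg hy.1).trans_eq hysum
    have hval : (δ / 2) ^ 2 / (d : ℝ) ^ 2 = 2 * (δ ^ 2 / (8 * (d : ℝ) ^ 2)) := by
      field_simp
      norm_num
    have hpos : 0 < δ ^ 2 / (8 * (d : ℝ) ^ 2) := by positivity
    exact ⟨y, hy, by linarith [norm_sub_le y x], by linarith⟩
end

section
/- Let d ≥ 1, α ∈ (0,1), and 0 ≤ ε < α^d/2. Let B = {z ∈ ℝ^d : ‖z‖ ≤ 1} be the closed unit Euclidean ball and define u : B × B → ℝ by u(x₁, x₂) = 1 + cos((π/α²)·‖x₁ − x₂‖²) if ‖x₁ − x₂‖ ≤ α, and u(x₁, x₂) = 0 otherwise. Let p₁ and p₂ be finitely supported probability distributions on B, supported on k and l points respectively, forming an ε-approximate mixed Nash equilibrium of the two-player zero-sum game with payoff u to the first (maximizing) player: E_{x₂∼p₂}[u(x₁, x₂)] ≤ E_{x₁∼p₁, x₂∼p₂}[u(x₁,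 x₂)] + ε for every x₁ ∈ B, and E_{x₁∼p₁}[u(x₁, x₂)] ≥ E_{x₁∼p₁, x₂∼p₂}[u(x₁, x₂)] − ε for every x₂ ∈ B. Then k ≥ (1/α)^d or l ≥ (1/α)^d. -/
/-- The payoff `u(x₁, x₂) = 1 + cos((π/α²)‖x₁ − x₂‖²)` if `‖x₁ − x₂‖ ≤ α`, and `0`
otherwise. -/
noncomputable def karlinPayoff {d : ℕ} (α : ℝ) (x₁ x₂ : EuclideanSpace ℝ (Fin d)) : ℝ :=
  if ‖x₁ - x₂‖ ≤ α then 1 + Real.cos (Real.pi / α ^ 2 * ‖x₁ - x₂‖ ^ 2) else 0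

/-!
If both supports have fewer than `(1/α)^d` points, each player can exploit the other. The minimizer
can hide: `k` balls of radius `α` have too little volume to cover the unit ball, so some `x₂` is out
of range of the whole support of `p₁`, and the equilibrium payoff is at most `ε`. The maximizer can
aim at the heaviest atom of `p₂`: its weight is at least `1/l > α^d` and the payoff at distance zero
is `2`, which earns more than `2 α^d`. Together these force `2 α^d < 2 ε`.
-/

open MeasureTheory Metric Module

section Covering

variable {E ι : Type*} [NormedAddCommGroup E] [NormedSpace ℝ E] [FiniteDimensional ℝ E] [Fintype ι]

theorem pow_finrank_le_card_mul_pow_finrank_of_closedBall_subset_iUnion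
    {a : ι → E} {z : E} {r R : ℝ} (hr : 0 ≤ r) (hR : 0 ≤ R)
    (hcover : closedBall z R ⊆ ⋃ i, closedBall (a i) r) :
    R ^ finrank ℝ E ≤ Fintype.card ι * r ^ finrank ℝ E := by
  borelize E
  let μ : Measure E := Measure.addHaar
  have unitBall_pos : 0 < μ.real (closedBall 0 1) :=
    ENNReal.toReal_pos (measure_closedBall_pos μ 0 one_pos).ne' measure_closedBall_lt_top.ne
  have union_ne_top : μ (⋃ i, closedBall (a i) r) ≠ ⊤ :=
    (isCompact_iUnion fun i => isCompact_closedBall (a i) r).measure_ne_top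
  refine le_of_mul_le_mul_right ?_ unitBall_pos
  calc R ^ finrank ℝ E * μ.real (closedBall 0 1)
      = μ.real (closedBall z R) := (Measure.addHaar_real_closedBall' μ z hR).symm
    _ ≤ μ.real (⋃ i, closedBall (a i) r) := measureReal_mono hcover union_ne_top
    _ ≤ ∑ i, μ.real (closedBall (a i) r) := measureReal_iUnion_fintype_le _
    _ = Fintype.card ι * r ^ finrank ℝ E * μ.real (closedBall 0 1) := by
      simp only [Measure.addHaar_real_closedBall' μ _ hr, Finset.sum_const, Finset.card_univ,
        nsmul_eq_mul, mul_assoc]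

theorem exists_norm_le_forall_lt_norm_sub (a : ι → E) {r R : ℝ} (hr : 0 ≤ r) (hR : 0 ≤ R)
    (hcard : Fintype.card ι * r ^ finrank ℝ E < R ^ finrank ℝ E) :
    ∃ x : E, ‖x‖ ≤ R ∧ ∀ i, r < ‖a i - x‖ := by
  contrapose! hcard with hnear
  refine pow_finrank_le_card_mul_pow_finrank_of_closedBall_subset_iUnion (a := a) (z := 0)
    hr hR fun x hx => ?_
  obtain ⟨i, hi⟩ := hnear x (mem_closedBall_zero_iff.1 hx)
  exact Set.mem_iUnion.2 ⟨i, by rwa [mem_closedBall', dist_eq_norm]⟩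

end Covering

theorem exists_inv_card_le_of_mem_stdSimplex {κ : Type*} [Fintype κ] {w : κ → ℝ}
    (hw : w ∈ stdSimplex ℝ κ) : ∃ j, (Fintype.card κ : ℝ)⁻¹ ≤ w j := by
  have : Nonempty κ := by
    by_contra! hempty
    simpa using hw.2
  have hsum : ∑ _j : κ, (Fintype.card κ : ℝ)⁻¹ ≤ ∑ j, w j := by simp [hw.2]
  obtain ⟨j, -, hj⟩ := Finset.exists_le_of_sum_le Finset.univ_nonempty hsum
  exact ⟨j, hj⟩

theorem exists_inv_card_mul_le_sum_mul_of_mem_stdSimplex {X κ : Type*} [Fintype κ]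
    {u : X → X → ℝ} {c : ℝ} (hu : ∀ x y, 0 ≤ u x y) (hdiag : ∀ x, c ≤ u x x)
    {w : κ → ℝ} (hw : w ∈ stdSimplex ℝ κ) (b : κ → X) :
    ∃ i, (Fintype.card κ : ℝ)⁻¹ * c ≤ ∑ j, w j * u (b i) (b j) := by
  obtain ⟨i, hi⟩ := exists_inv_card_le_of_mem_stdSimplex hw
  refine ⟨i, ?_⟩
  calc (Fintype.card κ : ℝ)⁻¹ * c
      ≤ (Fintype.card κ : ℝ)⁻¹ * u (b i) (b i) := by gcongr; exact hdiag _
    _ ≤ w i * u (b i) (b i) := by gcongr; exact hu _ _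
    _ ≤ ∑ j, w j * u (b i) (b j) :=
      Finset.single_le_sum (f := fun j => w j * u (b i) (b j))
        (fun j _ => mul_nonneg (hw.1 j) (hu _ _)) (Finset.mem_univ i)

section KarlinPayoff

variable {d : ℕ} {α : ℝ}

theorem karlinPayoff_nonneg (x y : EuclideanSpace ℝ (Fin d)) : 0 ≤ karlinPayoff α x y := by
  unfold karlinPayoff
  split_ifs
  · linarith [Real.neg_one_le_cos (Real.pi / α ^ 2 * ‖x - y‖ ^ 2)]
  · exact le_rfl

theorem karlinPayoff_self (hα : 0 ≤ α) (x : EuclideanSpace ℝ (Fin d)) :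
    karlinPayoff α x x = 2 := by
  simp [karlinPayoff, hα, one_add_one_eq_two]

theorem karlinPayoff_eq_zero_of_lt {x y : EuclideanSpace ℝ (Fin d)} (hxy : α < ‖x - y‖) :
    karlinPayoff α x y = 0 :=
  if_neg hxy.not_ge

end KarlinPayoff

theorem stmt_18_general {E ι κ : Type*} [NormedAddCommGroup E] [NormedSpace ℝ E]
    [FiniteDimensional ℝ E] [Fintype ι] [Fintype κ] {u : E → E → ℝ} {α c ε v : ℝ}
    (hα : 0 < α) (hc : 0 < c) (hε : 2 * ε ≤ c * α ^ finrank ℝ E)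
    (hu : ∀ x y, 0 ≤ u x y) (hdiag : ∀ x, c ≤ u x x)
    (hfar : ∀ x y, α < ‖x - y‖ → u x y = 0)
    (a : ι → E) (b : κ → E) (hb : ∀ j, ‖b j‖ ≤ 1)
    (w₁ : ι → ℝ) {w₂ : κ → ℝ} (hw₂ : w₂ ∈ stdSimplex ℝ κ)
    (hmax : ∀ x, ‖x‖ ≤ 1 → ∑ j, w₂ j * u x (b j) ≤ v + ε)
    (hmin : ∀ y, ‖y‖ ≤ 1 → v - ε ≤ ∑ i, w₁ i * u (a i) y) :
    (1 / α) ^ finrank ℝ E ≤ Fintype.card ι ∨ (1 / α) ^ finrank ℝ E ≤ Fintype.card κ := by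
  have hαd : 0 < α ^ finrank ℝ E := pow_pos hα _
  simp only [one_div_pow, div_le_iff₀ hαd]
  by_contra! ⟨hι, hκ⟩
  obtain ⟨y, hy, hya⟩ :=
    exists_norm_le_forall_lt_norm_sub a hα.le zero_le_one (by rwa [one_pow])
  have value_le : v ≤ ε := by
    have payoff_eq_zero : ∑ i, w₁ i * u (a i) y = 0 :=
      Finset.sum_eq_zero fun i _ => by rw [hfar _ _ (hya i), mul_zero]
    linarith [hmin y hy]
  obtain ⟨j, hj⟩ := exists_inv_card_mul_le_sum_mul_of_mem_stdSimplex hu hdiag hw₂ b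
  have : Nonempty κ := ⟨j⟩
  have inv_card_gt : α ^ finrank ℝ E < (Fintype.card κ : ℝ)⁻¹ := by
    rwa [lt_inv_comm₀ hαd (by positivity), ← one_div, lt_div_iff₀ hαd]
  linarith [hmax (b j) (hb j), mul_lt_mul_of_pos_right inv_card_gt hc]

/-- Let `d ≥ 1`, `α ∈ (0,1)`, `0 ≤ ε < α^d/2`, and let `B` be the closed
unit ball of `ℝ^d`. Let `p₁` (points `a : Fin k → B`, injective, with positive weights `w₁`
summing to 1) and `p₂` (points `b : Fin l → B`, injective, positive weights `w₂` summing
to 1) be finitely supported distributions on `B` forming an `ε`-approximate mixed Nash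
equilibrium of the zero-sum game with payoff `karlinPayoff α` to the maximizing first
player. Then `k ≥ (1/α)^d` or `l ≥ (1/α)^d`. -/
theorem stmt_18 {d : ℕ} (hd : 1 ≤ d) {α : ℝ} (hα0 : 0 < α) (hα1 : α < 1)
    {ε : ℝ} (hε0 : 0 ≤ ε) (hε : ε < α ^ d / 2)
    {k l : ℕ}
    (a : Fin k → EuclideanSpace ℝ (Fin d)) (b : Fin l → EuclideanSpace ℝ (Fin d))
    (ha : ∀ i, ‖a i‖ ≤ 1) (hb : ∀ j, ‖b j‖ ≤ 1)
    (hainj : Function.Injective a) (hbinj : Function.Injective b)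
    (w₁ : Fin k → ℝ) (w₂ : Fin l → ℝ)
    (hw₁pos : ∀ i, 0 < w₁ i) (hw₂pos : ∀ j, 0 < w₂ j)
    (hw₁ : ∑ i, w₁ i = 1) (hw₂ : ∑ j, w₂ j = 1)
    (hNE1 : ∀ x₁ : EuclideanSpace ℝ (Fin d), ‖x₁‖ ≤ 1 →
      ∑ j, w₂ j * karlinPayoff α x₁ (b j)
        ≤ (∑ i, ∑ j, w₁ i * w₂ j * karlinPayoff α (a i) (b j)) + ε)
    (hNE2 : ∀ x₂ : EuclideanSpace ℝ (Fin d), ‖x₂‖ ≤ 1 →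
      (∑ i, ∑ j, w₁ i * w₂ j * karlinPayoff α (a i) (b j)) - ε
        ≤ ∑ i, w₁ i * karlinPayoff α (a i) x₂) :
    (1 / α) ^ d ≤ (k : ℝ) ∨ (1 / α) ^ d ≤ (l : ℝ) := by
  have hε' : 2 * ε ≤ 2 * α ^ finrank ℝ (EuclideanSpace ℝ (Fin d)) := by
    rw [finrank_euclideanSpace_fin]
    linarith [pow_pos hα0 d]
  simpa using stmt_18_general hα0 two_pos hε' karlinPayoff_nonneg
    (fun x => (karlinPayoff_self hα0.le x).ge) (fun _ _ => karlinPayoff_eq_zero_of_lt)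
    a b hb w₁ ⟨fun j => (hw₂pos j).le, hw₂⟩ hNE1 hNE2
end
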